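/- arXiv:1210.6410 — 2 statements merged into one kernel-verified Lean document; each statement's English description precedes it below -/
import Mathlib

section
/- Let A = ℂ[x_1,…,x_N] be a polynomial ring, I an ideal of A, R = A/I, and let F_• : F_0 ←d_1 F_1 ← … ←d_n F_n ← 0 be a free resolution of R by finitely generated free A-modules. Suppose depth_A(I) = c. Then the local ring A_𝔭 has depth c for all primes 𝔭 associated to I if and only if depth(I(d_k)) > k for all k > c, where I(d_k) is the ideal of A generated by the maximal non-vanishing minors of d_k. -/
noncomputable section

open MvPolynomial

/-- The rank of a matrix over a commutative ring: the largest size of a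
square submatrix with nonzero determinant. -/
def Matrix.detRank {A : Type*} [CommRing A] {m n : Type*} [Fintype m] [Fintype n]
    (M : Matrix m n A) : ℕ :=
  sSup {r : ℕ | ∃ (f : Fin r → m) (g : Fin r → n),
    Function.Injective f ∧ Function.Injective g ∧ (M.submatrix f g).det ≠ 0}

/-- The ideal generated by the `r × r` minors of a matrix. -/
def Matrix.minorsIdeal {A : Type*} [CommRing A] {m n : Type*} [Fintype m] [Fintype n]
    (M : Matrix m n A) (r : ℕ) : Ideal A :=
  Ideal.span {x | ∃ (f : Fin r → m) (g : Fin r → n),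
    Function.Injective f ∧ Function.Injective g ∧ x = (M.submatrix f g).det}

/-- The ideal generated by the maximal non-vanishing minors of a matrix. -/
def Matrix.maxMinorsIdeal {A : Type*} [CommRing A] {m n : Type*} [Fintype m] [Fintype n]
    (M : Matrix m n A) : Ideal A :=
  M.minorsIdeal M.detRank

/-- The ideal `J` contains a weakly `A`-regular sequence of length `k`. -/
def Ideal.hasRegSeqOfLength {A : Type*} [CommRing A] (J : Ideal A) (k : ℕ) : Prop :=
  ∃ rs : List A, rs.length = k ∧ (∀ x ∈ rs, x ∈ J) ∧
    RingTheory.Sequence.IsWeaklyRegular A rs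

/-- The depth (grade) of an ideal. -/
def idealDepth {A : Type*} [CommRing A] (J : Ideal A) : ℕ∞ :=
  sSup {k : ℕ∞ | ∃ l : ℕ, k = l ∧ J.hasRegSeqOfLength l}

/-- The depth of the local ring `A_P`: the supremum of the lengths of regular
sequences contained in the maximal ideal `P A_P`. -/
def primeLocalDepth {A : Type*} [CommRing A] (P : Ideal A) (hP : P.IsPrime) : ℕ∞ :=
  letI := hP
  sSup {k : ℕ∞ | ∃ l : ℕ, k = l ∧ ∃ rs : List (Localization.AtPrime P),
    rs.length = l ∧ (∀ x ∈ rs, x ∈ IsLocalRing.maximalIdeal (Localization.AtPrime P)) ∧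
    RingTheory.Sequence.IsWeaklyRegular (Localization.AtPrime P) rs}

open CategoryTheory IsLocalRing RingTheory.Sequence TensorProduct

universe u

theorem projDimLE_succ_iff_of_exact {S : Type u} [CommRing S] {K F M : Type u}
    [AddCommGroup K] [Module S K] [AddCommGroup F] [Module S F] [AddCommGroup M] [Module S M]
    [Module.Projective S F] (g : K →ₗ[S] F) (f : F →ₗ[S] M) (hg : Function.Injective g)
    (hgf : Function.Exact g f) (hf : Function.Surjective f) (n : ℕ) :
    HasProjectiveDimensionLE (ModuleCat.of S M) (n + 1) ↔
      HasProjectiveDimensionLE (ModuleCat.of S K) n := by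
  have hS := LinearMap.shortExact_shortComplexKer (R := S) hf
  have : Projective (ModuleCat.of S F) := ModuleCat.projective_of_categoryTheory_projective _
  refine (hS.hasProjectiveDimensionLT_X₃_iff n this).trans ?_
  let e : K ≃ₗ[S] LinearMap.ker f :=
    (LinearEquiv.ofInjective g hg).trans (LinearEquiv.ofEq _ _ hgf.linearMap_ker_eq.symm)
  exact ⟨fun h ↦ hasProjectiveDimensionLT_of_iso e.symm.toModuleIso _,
    fun h ↦ hasProjectiveDimensionLT_of_iso e.toModuleIso _⟩

theorem projDimLE_zero_iff {S : Type u} [CommRing S] {M : Type u} [AddCommGroup M] [Module S M] :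
    HasProjectiveDimensionLE (ModuleCat.of S M) 0 ↔ Module.Projective S M := by
  rw [← projective_iff_hasProjectiveDimensionLE_zero, ← IsProjective.iff_projective]

theorem projDimLE_mono {S : Type u} [CommRing S] {M : Type u} [AddCommGroup M] [Module S M]
    {m n : ℕ} (h : HasProjectiveDimensionLE (ModuleCat.of S M) m) (hmn : m ≤ n) :
    HasProjectiveDimensionLE (ModuleCat.of S M) n :=
  hasProjectiveDimensionLT_of_ge _ (m + 1) (n + 1) (by omega)

theorem isLocalRing_quotient_span_singleton {S : Type*} [CommRing S] [IsLocalRing S] {x : S}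
    (hx : x ∈ maximalIdeal S) : IsLocalRing (S ⧸ Ideal.span {x}) := by
  have hnt : Nontrivial (S ⧸ Ideal.span {x}) :=
    Ideal.Quotient.nontrivial_iff.mpr fun h ↦
      (maximalIdeal.isMaximal S).ne_top
        (top_le_iff.mp (h ▸ (Ideal.span_singleton_le_iff_mem _).mpr hx))
  exact IsLocalRing.of_surjective' _ Ideal.Quotient.mk_surjective

open Pointwise in
theorem projDimLE_quotSMulTop_iff {S : Type u} [CommRing S] [IsLocalRing S] [IsNoetherianRing S]
    {x : S} (hx : x ∈ maximalIdeal S) (hxS : IsSMulRegular S x) (n : ℕ)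
    (M : Type u) [AddCommGroup M] [Module S M] [Module.Finite S M] (hxM : IsSMulRegular M x) :
    HasProjectiveDimensionLE (ModuleCat.of (S ⧸ Ideal.span {x}) (QuotSMulTop x M)) n ↔
      HasProjectiveDimensionLE (ModuleCat.of S M) n := by
  have := isLocalRing_quotient_span_singleton hx
  induction n generalizing M with
  | zero =>
    rw [projDimLE_zero_iff, projDimLE_zero_iff]
    have := Module.finitePresentation_of_finite S M
    have h := Module.free_quotSMulTop_iff_free S M (x := x)
      (IsLocalRing.maximalIdeal_le_jacobson _ hx) hxM
    have : Module.Finite (S ⧸ Ideal.span {x}) (QuotSMulTop x M) :=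
      Module.Finite.of_restrictScalars_finite S _ _
    constructor
    · intro h1
      have := h.mp Module.free_of_flat_of_isLocalRing
      infer_instance
    · intro h1
      have := h.mpr Module.free_of_flat_of_isLocalRing
      infer_instance
  | succ n ih =>
    obtain ⟨r, f, hf⟩ := Module.Finite.exists_fin' S M
    have hxF : IsSMulRegular (Fin r → S) x := IsSMulRegular.pi fun _ ↦ hxS
    let i := (LinearMap.ker f).subtype
    have hi : Function.Injective i := Subtype.val_injective
    have hif : Function.Exact i f := LinearMap.exact_subtype_ker_map f
    have hxK : IsSMulRegular (LinearMap.ker f) x := hxF.of_injective i hi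
    refine Iff.trans ?_
      ((ih (LinearMap.ker f) hxK).trans (projDimLE_succ_iff_of_exact i f hi hif hf n).symm)
    let i' := (QuotSMulTop.map x i).extendScalarsOfSurjective
      (R := S) (S := S ⧸ Ideal.span {x}) Ideal.Quotient.mk_surjective
    let f' := (QuotSMulTop.map x f).extendScalarsOfSurjective
      (R := S) (S := S ⧸ Ideal.span {x}) Ideal.Quotient.mk_surjective
    refine projDimLE_succ_iff_of_exact i' f' ?_ ?_ ?_ n
    · refine (injective_iff_map_eq_zero i').mpr fun a ha ↦ ?_
      obtain ⟨v, rfl⟩ := Submodule.mkQ_surjective _ a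
      have hv : (v : Fin r → S) ∈ x • (⊤ : Submodule S (Fin r → S)) :=
        (Submodule.Quotient.mk_eq_zero _).mp ha
      obtain ⟨w, -, hw⟩ := (Submodule.mem_smul_pointwise_iff_exists _ _ _).mp hv
      have hfw : f w = 0 := hxM.right_eq_zero_of_smul (by rw [← map_smul, hw]; exact v.2)
      refine (Submodule.Quotient.mk_eq_zero _).mpr
        ((Submodule.mem_smul_pointwise_iff_exists _ _ _).mpr ⟨⟨w, hfw⟩, trivial, ?_⟩)
      exact Subtype.ext hw
    · exact QuotSMulTop.map_exact x hif hf
    · exact QuotSMulTop.map_surjective x hf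

theorem exists_minimal_cover (S : Type*) [CommRing S] [IsLocalRing S] (M : Type*)
    [AddCommGroup M] [Module S M] [Module.Finite S M] :
    ∃ f : (Fin (Module.finrank (ResidueField S) (TensorProduct S (ResidueField S) M)) → S) →ₗ[S] M,
      Function.Surjective f := by
  let b := Module.finBasis (ResidueField S) (TensorProduct S (ResidueField S) M)
  have hs : Function.Surjective (TensorProduct.mk S (ResidueField S) M 1) :=
    TensorProduct.mk_surjective S M (ResidueField S) IsLocalRing.residue_surjective
  choose v hv using fun i ↦ hs (b i)
  refine ⟨Fintype.linearCombination S v, ?_⟩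
  rw [← LinearMap.range_eq_top, Fintype.range_linearCombination]
  exact span_eq_top_of_tmul_eq_basis v b hv

theorem algebraMap_eq_zero_of_mem_ker {S L M : Type*} [CommRing S] [Field L] [Algebra S L]
    [AddCommGroup M] [Module S M] {q : ℕ}
    (hq : q = Module.finrank L (TensorProduct S L M)) (f : (Fin q → S) →ₗ[S] M)
    (hf : Function.Surjective f) {v : Fin q → S} (hv : f v = 0) (i : Fin q) :
    algebraMap S L (v i) = 0 := by
  have := (algebraMap S L).domain_nontrivial
  have hfin : Module.Finite S M := Module.Finite.of_surjective f hf
  have hsurj : Function.Surjective (f.baseChange L) := LinearMap.lTensor_surjective L hf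
  have hinj := (LinearMap.injective_iff_surjective_of_finrank_eq_finrank
    (by rw [← hq, Module.finrank_baseChange, Module.finrank_fin_fun])).mpr hsurj
  have h0 : (1 : L) ⊗ₜ[S] v = 0 := hinj (by simp [hv])
  have := congrArg (fun z ↦ TensorProduct.piScalarRight S L L (Fin q) z i) h0
  simpa [Algebra.smul_def] using this

/-- Over a local ring in which the maximal ideal annihilates a nonzero element, finitely generated
modules of finite projective dimension are projective. -/
theorem projDimLE_zero_of_socle {S : Type u} [CommRing S] [IsLocalRing S] [IsNoetherianRing S]
    {s : S} (hs : s ≠ 0) (hsm : ∀ y ∈ maximalIdeal S, y * s = 0) (n : ℕ)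
    (M : Type u) [AddCommGroup M] [Module S M] [Module.Finite S M]
    (h : HasProjectiveDimensionLE (ModuleCat.of S M) n) :
    HasProjectiveDimensionLE (ModuleCat.of S M) 0 := by
  induction n generalizing M with
  | zero => exact h
  | succ n ih =>
    obtain ⟨f, hf⟩ := exists_minimal_cover S M
    have hex : Function.Exact (LinearMap.ker f).subtype f := LinearMap.exact_subtype_ker_map f
    have hK := ih (LinearMap.ker f)
      ((projDimLE_succ_iff_of_exact _ f Subtype.val_injective hex hf n).mp h)
    rw [projDimLE_zero_iff] at hK ⊢
    have hfree : Module.Free S (LinearMap.ker f) := Module.free_of_flat_of_isLocalRing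
    have hbot : LinearMap.ker f = ⊥ := by
      by_contra hne
      have : Nontrivial (LinearMap.ker f) := Submodule.nontrivial_iff_ne_bot.mpr hne
      refine hs ((Module.annihilator_eq_bot (R := S) (M := LinearMap.ker f)).mpr inferInstance ▸
        Module.mem_annihilator.mpr fun v ↦ ?_ : s ∈ (⊥ : Ideal S))
      refine Subtype.ext (funext fun i ↦ ?_)
      have := algebraMap_eq_zero_of_mem_ker (L := ResidueField S) rfl f hf v.2 i
      rw [ResidueField.algebraMap_eq, IsLocalRing.residue_eq_zero_iff] at this
      simpa [mul_comm] using hsm _ this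
    exact Module.Projective.of_equiv (LinearEquiv.ofBijective f ⟨LinearMap.ker_eq_bot.mp hbot, hf⟩)

theorem isWeaklyRegular_map_mk_of_cons {S : Type*} [CommRing S] {x : S} {xs : List S}
    (h : IsWeaklyRegular S (x :: xs)) :
    IsWeaklyRegular (S ⧸ Ideal.span {x}) (xs.map (Ideal.Quotient.mk (Ideal.span {x}))) := by
  have h2 := ((isWeaklyRegular_cons_iff' S x xs).mp h).2
  have e : QuotSMulTop x S ≃ₗ[S] S ⧸ Ideal.span {x} :=
    Submodule.quotEquivOfEq _ _ (by
      rw [← Submodule.ideal_span_singleton_smul, smul_eq_mul, Ideal.mul_top])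
  exact ((e.extendScalarsOfSurjective (S := S ⧸ Ideal.span {x})
    Ideal.Quotient.mk_surjective).isWeaklyRegular_congr _).mp h2

theorem mk_mem_ofList_map_iff {S : Type*} [CommRing S] (x : S) (xs : List S) (s : S) :
    Ideal.Quotient.mk (Ideal.span {x}) s ∈
      Ideal.ofList (xs.map (Ideal.Quotient.mk (Ideal.span {x}))) ↔ s ∈ Ideal.ofList (x :: xs) := by
  rw [← Ideal.map_ofList, ← Ideal.mem_comap,
    Ideal.comap_map_of_surjective _ Ideal.Quotient.mk_surjective, ← RingHom.ker_eq_comap_bot,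
    Ideal.mk_ker, Ideal.ofList_cons, sup_comm]

theorem maximalIdeal_quotient {S : Type*} [CommRing S] [IsLocalRing S] (I : Ideal S)
    [IsLocalRing (S ⧸ I)] {y : S} :
    Ideal.Quotient.mk I y ∈ maximalIdeal (S ⧸ I) ↔ y ∈ maximalIdeal S := by
  have := IsLocalHom.of_surjective (Ideal.Quotient.mk I) Ideal.Quotient.mk_surjective
  exact map_mem_nonunits_iff _ _

theorem projDimLE_length_of_socle {S : Type u} [CommRing S] [IsLocalRing S] [IsNoetherianRing S]
    {xs : List S} (hxs : ∀ x ∈ xs, x ∈ maximalIdeal S) (hreg : IsWeaklyRegular S xs)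
    {s : S} (hs : s ∉ Ideal.ofList xs) (hsm : ∀ y ∈ maximalIdeal S, y * s ∈ Ideal.ofList xs)
    {n : ℕ} (M : Type u) [AddCommGroup M] [Module S M] [Module.Finite S M]
    (h : HasProjectiveDimensionLE (ModuleCat.of S M) n) :
    HasProjectiveDimensionLE (ModuleCat.of S M) xs.length := by
  obtain ⟨t, ht⟩ : ∃ t, xs.length = t := ⟨_, rfl⟩
  induction t generalizing S M n with
  | zero =>
    obtain rfl := List.length_eq_zero_iff.mp ht
    simp only [Ideal.ofList_nil, Ideal.mem_bot] at hs hsm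
    exact projDimLE_zero_of_socle hs hsm n M h
  | succ t ih =>
    obtain ⟨x, rs, rfl⟩ := List.exists_cons_of_length_eq_add_one ht
    have hx : x ∈ maximalIdeal S := hxs x (by simp)
    have hxS : IsSMulRegular S x := ((isWeaklyRegular_cons_iff S x rs).mp hreg).1
    have := isLocalRing_quotient_span_singleton hx
    obtain ⟨r, f, hf⟩ := Module.Finite.exists_fin' S M
    have hex : Function.Exact (LinearMap.ker f).subtype f := LinearMap.exact_subtype_ker_map f
    have key := projDimLE_succ_iff_of_exact _ f Subtype.val_injective hex hf
    have hxF : IsSMulRegular (Fin r → S) x := IsSMulRegular.pi fun _ ↦ hxS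
    have hxK : IsSMulRegular (LinearMap.ker f) x :=
      hxF.of_injective (LinearMap.ker f).subtype Subtype.val_injective
    have hK := (key n).mp (projDimLE_mono h (Nat.le_succ n))
    have CR := fun n ↦ projDimLE_quotSMulTop_iff hx hxS n (LinearMap.ker f) hxK
    have : Module.Finite (S ⧸ Ideal.span {x}) (QuotSMulTop x (LinearMap.ker f)) :=
      Module.Finite.of_restrictScalars_finite S _ _
    have := ih (S := S ⧸ Ideal.span {x}) (xs := rs.map (Ideal.Quotient.mk (Ideal.span {x})))
      (by
        intro y hy
        obtain ⟨z, hz, rfl⟩ := List.mem_map.mp hy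
        exact (maximalIdeal_quotient _).mpr (hxs z (by simp [hz])))
      (isWeaklyRegular_map_mk_of_cons hreg)
      (s := Ideal.Quotient.mk _ s) (by rwa [mk_mem_ofList_map_iff])
      (by
        intro y hy
        obtain ⟨y, rfl⟩ := Ideal.Quotient.mk_surjective y
        rw [← map_mul, mk_mem_ofList_map_iff]
        exact hsm y ((maximalIdeal_quotient _).mp hy))
      (QuotSMulTop x (LinearMap.ker f)) ((CR n).mpr hK) (by simpa using ht)
    rw [List.length_map] at this
    exact (key _).mpr ((CR _).mp this)

theorem eq_zero_of_maximalIdeal_smul_eq_zero {S : Type u} [CommRing S] [IsLocalRing S]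
    [IsNoetherianRing S] {xs : List S} (hxs : ∀ x ∈ xs, x ∈ maximalIdeal S)
    (hreg : IsWeaklyRegular S xs) {p : ℕ} (hp : p < xs.length)
    (M : Type u) [AddCommGroup M] [Module S M] [Module.Finite S M]
    (h : HasProjectiveDimensionLE (ModuleCat.of S M) p) {y : M}
    (hy : ∀ a ∈ maximalIdeal S, a • y = 0) : y = 0 := by
  induction p generalizing S M with
  | zero =>
    obtain ⟨x, rs, rfl⟩ := List.exists_cons_of_length_pos hp
    have hxS : IsSMulRegular S x := ((isWeaklyRegular_cons_iff S x rs).mp hreg).1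
    have : Module.Projective S M := projDimLE_zero_iff.mp h
    have : Module.Free S M := Module.free_of_flat_of_isLocalRing
    let b := Module.finBasis S M
    refine b.equivFun.injective (funext fun i ↦ ?_)
    refine hxS.right_eq_zero_of_smul ?_ |>.trans (by simp)
    rw [← Pi.smul_apply, ← map_smul, hy x (hxs x (by simp))]
    simp
  | succ p ih =>
    obtain ⟨x, rs, rfl⟩ := List.exists_cons_of_length_pos ((Nat.zero_lt_succ p).trans hp)
    have hx : x ∈ maximalIdeal S := hxs x (by simp)
    have hxS : IsSMulRegular S x := ((isWeaklyRegular_cons_iff S x rs).mp hreg).1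
    have := isLocalRing_quotient_span_singleton hx
    obtain ⟨r, f, hf⟩ := Module.Finite.exists_fin' S M
    have hex : Function.Exact (LinearMap.ker f).subtype f := LinearMap.exact_subtype_ker_map f
    have key := projDimLE_succ_iff_of_exact _ f Subtype.val_injective hex hf
    have hxF : IsSMulRegular (Fin r → S) x := IsSMulRegular.pi fun _ ↦ hxS
    have hxK : IsSMulRegular (LinearMap.ker f) x :=
      hxF.of_injective (LinearMap.ker f).subtype Subtype.val_injective
    have CR := projDimLE_quotSMulTop_iff hx hxS p (LinearMap.ker f) hxK
    have : Module.Finite (S ⧸ Ideal.span {x}) (QuotSMulTop x (LinearMap.ker f)) :=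
      Module.Finite.of_restrictScalars_finite S _ _
    obtain ⟨w, rfl⟩ := hf y
    have hmem : ∀ a ∈ maximalIdeal S, a • w ∈ LinearMap.ker f := fun a ha ↦ by
      rw [LinearMap.mem_ker, map_smul, hy a ha]
    have := ih (S := S ⧸ Ideal.span {x}) (xs := rs.map (Ideal.Quotient.mk (Ideal.span {x})))
      (by
        intro y hy
        obtain ⟨z, hz, rfl⟩ := List.mem_map.mp hy
        exact (maximalIdeal_quotient _).mpr (hxs z (by simp [hz])))
      (isWeaklyRegular_map_mk_of_cons hreg) (by simpa using hp)
      (QuotSMulTop x (LinearMap.ker f)) (CR.mpr ((key p).mp h))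
      (y := Submodule.Quotient.mk ⟨x • w, hmem x hx⟩) (by
        intro a ha
        obtain ⟨a, rfl⟩ := Ideal.Quotient.mk_surjective a
        replace ha := (maximalIdeal_quotient _).mp ha
        refine (Submodule.Quotient.mk_eq_zero _).mpr
          ((Submodule.mem_smul_pointwise_iff_exists _ _ _).mpr
            ⟨⟨a • w, hmem a ha⟩, trivial, Subtype.ext (smul_comm _ _ _)⟩))
    obtain ⟨v, -, hv⟩ := (Submodule.mem_smul_pointwise_iff_exists _ _ _).mp
      ((Submodule.Quotient.mk_eq_zero _).mp this)
    have : (v : Fin r → S) = w := hxF (congrArg Subtype.val hv)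
    exact this ▸ v.2

theorem hasRegSeqOfLength_le_of_idealDepth_le {A : Type*} [CommRing A] {J : Ideal A} {c l : ℕ}
    (h : idealDepth J ≤ c) (hl : J.hasRegSeqOfLength l) : l ≤ c := by
  exact_mod_cast (le_sSup ⟨l, rfl, hl⟩ : (l : ℕ∞) ≤ idealDepth J).trans h

theorem exists_hasRegSeqOfLength_of_lt_idealDepth {A : Type*} [CommRing A] {J : Ideal A} {c : ℕ}
    (h : c < idealDepth J) : ∃ l, c < l ∧ J.hasRegSeqOfLength l := by
  obtain ⟨_, ⟨l, rfl, hl⟩, hcl⟩ := lt_sSup_iff.mp h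
  exact ⟨l, by exact_mod_cast hcl, hl⟩

/-- An ideal containing a weakly regular sequence that cannot be extended inside the ideal consists
of zero divisors modulo that sequence. -/
theorem exists_prime_of_maximal_weaklyRegular {A : Type*} [CommRing A] [IsNoetherianRing A]
    {J : Ideal A} {xs : List A} (hreg : IsWeaklyRegular A xs)
    (hmax : ∀ y ∈ J, ¬ IsWeaklyRegular A (xs ++ [y])) :
    ∃ P : Ideal A, P.IsPrime ∧ J ≤ P ∧ ∃ s, ∀ y, y ∈ P ↔ y * s ∈ Ideal.ofList xs := by
  let Q := A ⧸ (Ideal.ofList xs • (⊤ : Submodule A A))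
  have hsub : (J : Set A) ⊆ ⋃ P ∈ associatedPrimes A Q, (P : Set A) := by
    intro y hy
    rw [biUnion_associatedPrimes_eq_zero_divisors]
    have hn : ¬ IsSMulRegular Q y := fun h ↦ hmax y hy <| by
      rw [isWeaklyRegular_append_iff, isWeaklyRegular_singleton_iff]
      exact ⟨hreg, h⟩
    rw [isSMulRegular_iff_right_eq_zero_of_smul] at hn
    push Not at hn
    obtain ⟨z, hz, hz0⟩ := hn
    exact ⟨z, hz0, hz⟩
  obtain ⟨P, hP, hJP⟩ := (Ideal.subset_union_prime_finite (associatedPrimes.finite A Q) (f := id) 0 0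
    (fun P hP _ _ ↦ hP.1)).mp hsub
  obtain ⟨hPp, z, hz⟩ := isAssociatedPrime_iff.mp hP
  obtain ⟨s, rfl⟩ := Submodule.mkQ_surjective _ z
  refine ⟨P, hPp, hJP, s, fun y ↦ ?_⟩
  rw [hz, Submodule.mem_colon_singleton, Submodule.mem_bot, ← map_smul, Submodule.mkQ_apply,
    Submodule.Quotient.mk_eq_zero, smul_eq_mul, smul_eq_mul, Ideal.mul_top]

theorem exists_maximal_weaklyRegular_of_idealDepth_le {A : Type*} [CommRing A] {J : Ideal A} {c : ℕ}
    (h : idealDepth J ≤ c) :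
    ∃ xs : List A, xs.length ≤ c ∧ (∀ x ∈ xs, x ∈ J) ∧ IsWeaklyRegular A xs ∧
      ∀ y ∈ J, ¬ IsWeaklyRegular A (xs ++ [y]) := by
  classical
  have h0 : J.hasRegSeqOfLength 0 := ⟨[], rfl, by simp, IsWeaklyRegular.nil A A⟩
  obtain ⟨xs, hl, hJ, hreg⟩ := Nat.findGreatest_spec (P := J.hasRegSeqOfLength) (Nat.zero_le c) h0
  refine ⟨xs, hl ▸ Nat.findGreatest_le c, hJ, hreg, fun y hy hy' ↦ ?_⟩
  have hlong : J.hasRegSeqOfLength (xs.length + 1) := ⟨xs ++ [y], by simp, fun x hx ↦ by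
    rcases List.mem_append.mp hx with hx | hx
    · exact hJ x hx
    · rwa [List.mem_singleton.mp hx], hy'⟩
  have := Nat.le_findGreatest (hasRegSeqOfLength_le_of_idealDepth_le h hlong) hlong
  omega

theorem Ideal.hasRegSeqOfLength.localization {A : Type*} [CommRing A] {J P : Ideal A} [P.IsPrime]
    (hJP : J ≤ P) {l : ℕ} (h : J.hasRegSeqOfLength l) :
    (maximalIdeal (Localization.AtPrime P)).hasRegSeqOfLength l := by
  obtain ⟨xs, hl, hJ, hreg⟩ := h
  refine ⟨xs.map (algebraMap A (Localization.AtPrime P)), by simpa using hl, fun y hy ↦ ?_,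
    hreg.of_isLocalization _ P.primeCompl⟩
  obtain ⟨x, hx, rfl⟩ := List.mem_map.mp hy
  exact (IsLocalization.AtPrime.to_map_mem_maximal_iff _ P x).mpr (hJP (hJ x hx))

theorem Matrix.exists_submatrix_det_ne_zero_iff {L : Type*} [Field L] {a b : ℕ}
    (B : Matrix (Fin a) (Fin b) L) (ρ : ℕ) :
    (∃ (f : Fin ρ → Fin a) (g : Fin ρ → Fin b), Function.Injective f ∧ Function.Injective g ∧
      (B.submatrix f g).det ≠ 0) ↔ ρ ≤ B.rank := by
  constructor
  · rintro ⟨f, g, -, -, h⟩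
    have := Matrix.rank_of_isUnit (B.submatrix f g)
      ((Matrix.isUnit_iff_isUnit_det _).mpr h.isUnit)
    rw [Fintype.card_fin] at this
    exact this ▸ Matrix.rank_submatrix_le B f g
  · intro h
    have step : ∀ {a b : ℕ} (B : Matrix (Fin a) (Fin b) L), ρ ≤ B.rank →
        ∃ f : Fin ρ → Fin a, LinearIndependent L (B.submatrix f id).row := by
      intro a b B h
      rw [Matrix.rank_eq_finrank_span_row] at h
      obtain ⟨w, hw, -, hli⟩ := Submodule.exists_fun_fin_finrank_span_eq L (Set.range B.row)
      choose f hf using hw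
      exact ⟨f ∘ Fin.castLE h, by
        have := hli.comp _ (Fin.castLE_injective h)
        rwa [← funext hf] at this⟩
    obtain ⟨f, hf⟩ := step B h
    have h1 : ρ ≤ (B.submatrix f id).transpose.rank := by
      rw [Matrix.rank_transpose, hf.rank_matrix, Fintype.card_fin]
    obtain ⟨g, hg⟩ := step _ h1
    have hdet : (B.submatrix f g).det ≠ 0 := by
      rw [← Matrix.det_transpose]
      exact ((Matrix.isUnit_iff_isUnit_det _).mp
        (Matrix.linearIndependent_rows_iff_isUnit.mp hg)).ne_zero
    refine ⟨f, g, fun i j hij ↦ ?_, fun i j hij ↦ ?_, hdet⟩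
    · by_contra hne
      exact hdet (Matrix.det_zero_of_row_eq hne (by ext; simp [hij]))
    · by_contra hne
      exact hdet (Matrix.det_zero_of_column_eq hne (by simp [hij]))

theorem Matrix.le_rank_map_iff {A L : Type*} [CommRing A] [Field L] [Algebra A L] {a b : ℕ}
    (B : Matrix (Fin a) (Fin b) A) (ρ : ℕ) :
    ρ ≤ (B.map (algebraMap A L)).rank ↔
      ∃ (f : Fin ρ → Fin a) (g : Fin ρ → Fin b), Function.Injective f ∧ Function.Injective g ∧
        algebraMap A L (B.submatrix f g).det ≠ 0 := by
  rw [← Matrix.exists_submatrix_det_ne_zero_iff]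
  simp only [RingHom.map_det, RingHom.mapMatrix_apply, Matrix.submatrix_map]

theorem Matrix.detRank_eq_rank_map {A K : Type*} [CommRing A] [Field K] [Algebra A K]
    [FaithfulSMul A K] {a b : ℕ} (B : Matrix (Fin a) (Fin b) A) :
    B.detRank = (B.map (algebraMap A K)).rank := by
  have : {r : ℕ | ∃ (f : Fin r → Fin a) (g : Fin r → Fin b), Function.Injective f ∧
      Function.Injective g ∧ (B.submatrix f g).det ≠ 0} =
      Set.Iic (B.map (algebraMap A K)).rank := by
    ext r
    simp [Matrix.le_rank_map_iff]
  rw [Matrix.detRank, this, csSup_Iic]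

theorem finrank_tensor_coker_add_rank {A L : Type*} [CommRing A] [Field L] [Algebra A L]
    {a b : ℕ} (B : Matrix (Fin a) (Fin b) A) :
    Module.finrank L (L ⊗[A] ((Fin a → A) ⧸ LinearMap.range B.mulVecLin)) +
      (B.map (algebraMap A L)).rank = a := by
  let π := (LinearMap.range B.mulVecLin).mkQ
  have hex : Function.Exact (B.mulVecLin.baseChange L) (π.baseChange L) :=
    lTensor_exact L (LinearMap.exact_map_mkQ_range _) (Submodule.mkQ_surjective _)
  have hsurj : Function.Surjective (π.baseChange L) :=
    LinearMap.lTensor_surjective L (Submodule.mkQ_surjective _)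
  have h1 := (π.baseChange L).finrank_range_add_finrank_ker
  have hA : Nontrivial A := (algebraMap A L).domain_nontrivial
  rw [LinearMap.range_eq_top.mpr hsurj, finrank_top, hex.linearMap_ker_eq] at h1
  have h3 : Module.finrank L (L ⊗[A] (Fin a → A)) = a := by
    rw [Module.finrank_baseChange, Module.finrank_fin_fun]
  rw [h3] at h1
  convert h1
  let e := fun m : ℕ ↦ Algebra.TensorProduct.basis L (Pi.basisFun A (Fin m))
  have h2 : LinearMap.toMatrix (e b) (e a) (B.mulVecLin.baseChange L) =
      B.map (algebraMap A L) := by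
    rw [LinearMap.toMatrix_baseChange]
    congr 1
    ext i j
    simp [LinearMap.toMatrix_apply]
  rw [Matrix.rank_eq_finrank_range_toLin _ (e a) (e b), ← h2, Matrix.toLin_toMatrix]

theorem finrank_tensor_localizedModule {A S L : Type*} [CommRing A] (T : Submonoid A)
    [CommRing S] [Algebra A S] [IsLocalization T S] [Field L] [Algebra A L] [Algebra S L]
    [IsScalarTower A S L] (Z Z' : Type*) [AddCommGroup Z] [Module A Z]
    [AddCommGroup Z'] [Module A Z'] [Module S Z'] [IsScalarTower A S Z']
    (φ : Z →ₗ[A] Z') [IsLocalizedModule T φ] :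
    Module.finrank L (L ⊗[S] Z') = Module.finrank L (L ⊗[A] Z) := by
  let e : S ⊗[A] Z ≃ₗ[S] Z' := (IsLocalizedModule.isBaseChange T S φ).equiv
  exact LinearEquiv.finrank_eq
    ((TensorProduct.AlgebraTensorModule.congr (LinearEquiv.refl L L) e.symm).trans
      (TensorProduct.AlgebraTensorModule.cancelBaseChange A S L L Z))

theorem projective_iff_finrank_residueField_tensor {S : Type*} [CommRing S] [IsLocalRing S]
    (K : Type*) [Field K] [Algebra S K] [FaithfulSMul S K]
    (Z : Type*) [AddCommGroup Z] [Module S Z] [Module.Finite S Z] :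
    Module.Projective S Z ↔
      Module.finrank (ResidueField S) (ResidueField S ⊗[S] Z) = Module.finrank K (K ⊗[S] Z) := by
  constructor
  · intro hproj
    have : Module.Free S Z := Module.free_of_flat_of_isLocalRing
    rw [Module.finrank_baseChange, Module.finrank_baseChange]
  · intro hq
    obtain ⟨f, hf⟩ := exists_minimal_cover S Z
    have hinj : Function.Injective f := (injective_iff_map_eq_zero f).mpr fun v hv ↦
      funext fun i ↦ (FaithfulSMul.algebraMap_eq_zero_iff S K).mp
        (algebraMap_eq_zero_of_mem_ker hq f hf hv i)
    exact Module.Projective.of_equiv (LinearEquiv.ofBijective f ⟨hinj, hf⟩)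

theorem Matrix.not_maxMinorsIdeal_le_iff {A : Type*} [CommRing A] (P : Ideal A)
    (K κ : Type*) [Field K] [Algebra A K] [FaithfulSMul A K] [Field κ] [Algebra A κ]
    (hκ : ∀ x, algebraMap A κ x = 0 ↔ x ∈ P) {a b : ℕ} (B : Matrix (Fin a) (Fin b) A) :
    ¬ B.maxMinorsIdeal ≤ P ↔
      (B.map (algebraMap A κ)).rank = (B.map (algebraMap A K)).rank := by
  have hle : (B.map (algebraMap A κ)).rank ≤ (B.map (algebraMap A K)).rank := by
    obtain ⟨f, g, hf, hg, h⟩ := (B.le_rank_map_iff (L := κ) _).mp le_rfl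
    refine (B.le_rank_map_iff _).mpr ⟨f, g, hf, hg, fun h0 ↦ h ?_⟩
    rw [(FaithfulSMul.algebraMap_eq_zero_iff A K).mp h0, map_zero]
  rw [← hle.ge_iff_eq, B.le_rank_map_iff, ← B.detRank_eq_rank_map, Matrix.maxMinorsIdeal,
    Matrix.minorsIdeal, Ideal.span_le, Set.not_subset]
  constructor
  · rintro ⟨_, ⟨f, g, hf, hg, rfl⟩, h⟩
    exact ⟨f, g, hf, hg, fun h0 ↦ h ((hκ _).mp h0)⟩
  · rintro ⟨f, g, hf, hg, h⟩
    exact ⟨_, ⟨f, g, hf, hg, rfl⟩, fun h0 ↦ h ((hκ _).mpr h0)⟩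

theorem projective_localization_coker_iff {A : Type*} [CommRing A]
    (P : Ideal A) [P.IsPrime] (S : Type*) [CommRing S] [IsLocalRing S] [Algebra A S]
    [IsLocalization.AtPrime S P] (K : Type*) [Field K] [Algebra A K] [Algebra S K]
    [IsScalarTower A S K] [FaithfulSMul S K] [FaithfulSMul A K]
    {a b : ℕ} (B : Matrix (Fin a) (Fin b) A) (Z : Type*) [AddCommGroup Z] [Module A Z]
    [Module S Z] [IsScalarTower A S Z] (φ : ((Fin a → A) ⧸ LinearMap.range B.mulVecLin) →ₗ[A] Z)
    [IsLocalizedModule P.primeCompl φ] :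
    Module.Projective S Z ↔ ¬ B.maxMinorsIdeal ≤ P := by
  have hfin : Module.Finite S Z := Module.Finite.of_isLocalizedModule P.primeCompl φ
  have hκ : ∀ x, algebraMap A (ResidueField S) x = 0 ↔ x ∈ P := fun x ↦ by
    rw [IsScalarTower.algebraMap_apply A S (ResidueField S), ResidueField.algebraMap_eq,
      IsLocalRing.residue_eq_zero_iff]
    exact IsLocalization.AtPrime.to_map_mem_maximal_iff S P x
  rw [projective_iff_finrank_residueField_tensor K,
    B.not_maxMinorsIdeal_le_iff P K (ResidueField S) hκ,
    finrank_tensor_localizedModule P.primeCompl _ Z φ,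
    finrank_tensor_localizedModule P.primeCompl _ Z φ]
  have h1 := finrank_tensor_coker_add_rank (L := ResidueField S) B
  have h2 := finrank_tensor_coker_add_rank (L := K) B
  omega

theorem projective_localizedModule_coker_iff {A : Type*} [CommRing A] [IsDomain A]
    (P : Ideal A) [P.IsPrime] {a b : ℕ} (B : Matrix (Fin a) (Fin b) A) :
    Module.Projective (Localization.AtPrime P)
      (LocalizedModule P.primeCompl ((Fin a → A) ⧸ LinearMap.range B.mulVecLin)) ↔
      ¬ B.maxMinorsIdeal ≤ P := by
  have : IsFractionRing (Localization.AtPrime P) (FractionRing A) :=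
    IsFractionRing.isFractionRing_of_isDomain_of_isLocalization P.primeCompl _ _
  exact projective_localization_coker_iff P _ (FractionRing A) B _
    (LocalizedModule.mkLinearMap P.primeCompl _)

theorem projDimLE_iff_projective_of_exact {S : Type u} [CommRing S] (W F : ℕ → Type u)
    [∀ k, AddCommGroup (W k)] [∀ k, Module S (W k)] [∀ k, AddCommGroup (F k)]
    [∀ k, Module S (F k)] [∀ k, Module.Projective S (F k)] (n : ℕ)
    (hW : ∀ k < n, ∃ (g : W (k + 1) →ₗ[S] F k) (f : F k →ₗ[S] W k), Function.Injective g ∧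
      Function.Exact g f ∧ Function.Surjective f)
    (hn : ∀ k, n ≤ k → Module.Projective S (W k)) (k : ℕ) :
    HasProjectiveDimensionLE (ModuleCat.of S (W 0)) k ↔ Module.Projective S (W k) := by
  have main : ∀ i j m, j + i = m → m ≤ n →
      (HasProjectiveDimensionLE (ModuleCat.of S (W j)) i ↔ Module.Projective S (W m)) := by
    intro i
    induction i with
    | zero =>
      rintro j _ rfl -
      exact projDimLE_zero_iff
    | succ i ih =>
      intro j m hjm hm
      obtain ⟨g, f, hg, hgf, hf⟩ := hW j (by omega)
      rw [projDimLE_succ_iff_of_exact g f hg hgf hf, ih (j + 1) m (by omega) hm]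
  rcases le_total k n with hk | hk
  · exact main k 0 k (zero_add k) hk
  · exact iff_of_true
      (projDimLE_mono ((main n 0 n (zero_add n) le_rfl).mpr (hn n le_rfl)) hk) (hn k hk)

section FreeResolution

variable {A : Type u} [CommRing A] {n : ℕ} {r : ℕ → ℕ}
  {d : ∀ k, Matrix (Fin (r k)) (Fin (r (k + 1))) A}

theorem projDimLE_localizedModule_iff_projective (hlen : ∀ k, n ≤ k → d k = 0)
    (hexact : ∀ k < n, LinearMap.ker (d k).mulVecLin = LinearMap.range (d (k + 1)).mulVecLin)
    (P : Ideal A) [P.IsPrime] (k : ℕ) :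
    HasProjectiveDimensionLE (ModuleCat.of (Localization.AtPrime P)
      (LocalizedModule P.primeCompl ((Fin (r 0) → A) ⧸ LinearMap.range (d 0).mulVecLin))) k ↔
      Module.Projective (Localization.AtPrime P)
        (LocalizedModule P.primeCompl ((Fin (r k) → A) ⧸ LinearMap.range (d k).mulVecLin)) := by
  refine projDimLE_iff_projective_of_exact (S := Localization.AtPrime P)
    (fun k ↦ LocalizedModule P.primeCompl ((Fin (r k) → A) ⧸ LinearMap.range (d k).mulVecLin))
    (fun k ↦ LocalizedModule P.primeCompl (Fin (r k) → A)) n (fun k hk ↦ ?_) (fun k hk ↦ ?_) k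
  · let g := (LinearMap.range (d (k + 1)).mulVecLin).liftQ (d k).mulVecLin (hexact k hk).ge
    let f := (LinearMap.range (d k).mulVecLin).mkQ
    have hg : Function.Injective g :=
      LinearMap.ker_eq_bot.mp (Submodule.ker_liftQ_eq_bot _ _ _ (hexact k hk).le)
    have hgf : Function.Exact g f := by
      rw [LinearMap.exact_iff, Submodule.ker_mkQ, Submodule.range_liftQ]
    exact ⟨LocalizedModule.map _ g, LocalizedModule.map _ f, LocalizedModule.map_injective _ g hg,
      LocalizedModule.map_exact _ g f hgf,
      LocalizedModule.map_surjective _ f (Submodule.mkQ_surjective _)⟩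
  · have h0 : LinearMap.range (d k).mulVecLin = ⊥ := by
      rw [hlen k hk, Matrix.mulVecLin_zero, LinearMap.range_zero]
    have : Module.Projective A ((Fin (r k) → A) ⧸ LinearMap.range (d k).mulVecLin) :=
      Module.Projective.of_equiv (Submodule.quotEquivOfEqBot _ h0).symm
    exact Module.projective_of_isLocalizedModule P.primeCompl
      (LocalizedModule.mkLinearMap P.primeCompl _)

theorem projDimLE_localizedModule_of_free_resolution (hlen : ∀ k, n ≤ k → d k = 0)
    (hexact : ∀ k < n, LinearMap.ker (d k).mulVecLin = LinearMap.range (d (k + 1)).mulVecLin)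
    (P : Ideal A) [P.IsPrime] :
    HasProjectiveDimensionLE (ModuleCat.of (Localization.AtPrime P)
      (LocalizedModule P.primeCompl ((Fin (r 0) → A) ⧸ LinearMap.range (d 0).mulVecLin))) n := by
  rw [projDimLE_localizedModule_iff_projective hlen hexact]
  have h0 : LinearMap.range (d n).mulVecLin = ⊥ := by
    rw [hlen n le_rfl, Matrix.mulVecLin_zero, LinearMap.range_zero]
  have : Module.Projective A ((Fin (r n) → A) ⧸ LinearMap.range (d n).mulVecLin) :=
    Module.Projective.of_equiv (Submodule.quotEquivOfEqBot _ h0).symm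
  exact Module.projective_of_isLocalizedModule P.primeCompl
    (LocalizedModule.mkLinearMap P.primeCompl _)

end FreeResolution

theorem le_of_hasRegSeqOfLength_of_mem_associatedPrimes {S : Type u} [CommRing S] [IsLocalRing S]
    [IsNoetherianRing S] {M : Type u} [AddCommGroup M] [Module S M] [Module.Finite S M]
    (hM : maximalIdeal S ∈ associatedPrimes S M) {p : ℕ}
    (h : HasProjectiveDimensionLE (ModuleCat.of S M) p) {l : ℕ}
    (hl : (maximalIdeal S).hasRegSeqOfLength l) : l ≤ p := by
  obtain ⟨hprime, y, hy⟩ := isAssociatedPrime_iff.mp hM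
  obtain ⟨xs, rfl, hxs, hreg⟩ := hl
  by_contra! hlt
  have hy0 : y = 0 := eq_zero_of_maximalIdeal_smul_eq_zero hxs hreg hlt M h fun a ha ↦ by
    rwa [hy, Submodule.mem_colon_singleton, Submodule.mem_bot] at ha
  refine hprime.ne_top ((Ideal.eq_top_iff_one _).mpr ?_)
  rw [hy, Submodule.mem_colon_singleton, hy0, smul_zero]
  exact Submodule.zero_mem _

theorem projDimLE_of_socle_of_notMem_associatedPrimes {S : Type u} [CommRing S] [IsLocalRing S]
    [IsNoetherianRing S] {xs : List S} (hxs : ∀ x ∈ xs, x ∈ maximalIdeal S)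
    (hreg : IsWeaklyRegular S xs) {s : S} (hs : s ∉ Ideal.ofList xs)
    (hsm : ∀ y ∈ maximalIdeal S, y * s ∈ Ideal.ofList xs) {k : ℕ} (hk : xs.length ≤ k + 1)
    {M : Type u} [AddCommGroup M] [Module S M] [Module.Finite S M]
    (hM : maximalIdeal S ∉ associatedPrimes S M) {n : ℕ}
    (h : HasProjectiveDimensionLE (ModuleCat.of S M) n) :
    HasProjectiveDimensionLE (ModuleCat.of S M) k := by
  obtain ⟨x, hx, hxM⟩ : ∃ x ∈ maximalIdeal S, IsSMulRegular M x := by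
    by_contra! hno
    have hsub : (maximalIdeal S : Set S) ⊆ ⋃ P ∈ associatedPrimes S M, (P : Set S) := by
      intro y hy
      rw [biUnion_associatedPrimes_eq_zero_divisors]
      have hn := hno y hy
      rw [isSMulRegular_iff_right_eq_zero_of_smul] at hn
      push Not at hn
      obtain ⟨z, hz, hz0⟩ := hn
      exact ⟨z, hz0, hz⟩
    obtain ⟨P, hP, hle⟩ := (Ideal.subset_union_prime_finite (associatedPrimes.finite S M)
      (f := id) 0 0 (fun P hP _ _ ↦ hP.1)).mp hsub
    exact hM ((maximalIdeal.isMaximal S).eq_of_le hP.1.ne_top hle ▸ hP)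
  have heq : projectiveDimension (ModuleCat.of S (QuotSMulTop x M)) =
      projectiveDimension (ModuleCat.of S M) + 1 :=
    ModuleCat.projectiveDimension_quotSMulTop_eq_succ_of_isSMulRegular (ModuleCat.of S M) x hxM hx
  have key : ∀ m : ℕ, HasProjectiveDimensionLE (ModuleCat.of S (QuotSMulTop x M)) (m + 1) ↔
      HasProjectiveDimensionLE (ModuleCat.of S M) m := fun m ↦ by
    rw [← projectiveDimension_le_iff, ← projectiveDimension_le_iff, Nat.cast_add, Nat.cast_one,
      heq, ENat.WithBot.add_le_add_one_right_iff]
  rw [← key] at h ⊢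
  exact projDimLE_mono (projDimLE_length_of_socle hxs hreg hs hsm _ h) hk

theorem idealDepth_maximalIdeal_le_of_projDimLE_iff {A : Type u} [CommRing A] [IsNoetherianRing A]
    {M : Type u} [AddCommGroup M] [Module A M] [Module.Finite A M] {P : Ideal A} [P.IsPrime]
    (hP : P ∈ associatedPrimes A M) {J : ℕ → Ideal A} {n c : ℕ}
    (hn : HasProjectiveDimensionLE
      (ModuleCat.of (Localization.AtPrime P) (LocalizedModule P.primeCompl M)) n)
    (hJ : ∀ k, HasProjectiveDimensionLE
      (ModuleCat.of (Localization.AtPrime P) (LocalizedModule P.primeCompl M)) k ↔ ¬ J k ≤ P)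
    (hdepth : ∀ k : ℕ, c < k + 1 → (k : ℕ∞) + 1 < idealDepth (J k)) :
    idealDepth (maximalIdeal (Localization.AtPrime P)) ≤ c := by
  classical
  by_contra! hlt
  obtain ⟨l, hcl, hl⟩ := exists_hasRegSeqOfLength_of_lt_idealDepth hlt
  have hnoeth : IsNoetherianRing (Localization.AtPrime P) :=
    IsLocalization.isNoetherianRing P.primeCompl _ inferInstance
  have hass := Module.associatedPrimes.mem_associatedPrimes_atPrime_of_mem_associatedPrimes hP
  have hbound : ∀ {p : ℕ}, HasProjectiveDimensionLE
      (ModuleCat.of (Localization.AtPrime P) (LocalizedModule P.primeCompl M)) p → ∀ {l : ℕ},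
      (maximalIdeal (Localization.AtPrime P)).hasRegSeqOfLength l → l ≤ p :=
    fun h _ hl ↦ le_of_hasRegSeqOfLength_of_mem_associatedPrimes hass h hl
  let t := Nat.findGreatest (maximalIdeal (Localization.AtPrime P)).hasRegSeqOfLength n
  have ht : (maximalIdeal (Localization.AtPrime P)).hasRegSeqOfLength t :=
    Nat.findGreatest_spec (hbound hn hl) hl
  have hmax : ∀ l, (maximalIdeal (Localization.AtPrime P)).hasRegSeqOfLength l → l ≤ t :=
    fun l hl ↦ Nat.le_findGreatest (hbound hn hl) hl
  have hct := hmax l hl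
  obtain ⟨k, hk⟩ : ∃ k, t = k + 1 := ⟨t - 1, by omega⟩
  by_cases hle : J k ≤ P
  · obtain ⟨l', hkl', hl'⟩ := exists_hasRegSeqOfLength_of_lt_idealDepth (c := k + 1)
      (by exact_mod_cast hdepth k (by omega))
    have := hmax l' (hl'.localization hle)
    omega
  · have := hbound ((hJ k).mpr hle) ht
    omega

theorem lt_idealDepth_of_idealDepth_maximalIdeal_le {A : Type u} [CommRing A] [IsNoetherianRing A]
    {M : Type u} [AddCommGroup M] [Module A M] [Module.Finite A M] {J : Ideal A} {n c k : ℕ}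
    (hn : ∀ (P : Ideal A) [P.IsPrime], HasProjectiveDimensionLE
      (ModuleCat.of (Localization.AtPrime P) (LocalizedModule P.primeCompl M)) n)
    (hJ : ∀ (P : Ideal A) [P.IsPrime], J ≤ P → ¬ HasProjectiveDimensionLE
      (ModuleCat.of (Localization.AtPrime P) (LocalizedModule P.primeCompl M)) k)
    (hdepth : ∀ (P : Ideal A) [P.IsPrime], P ∈ associatedPrimes A M →
      idealDepth (maximalIdeal (Localization.AtPrime P)) ≤ c)
    (hck : c < k + 1) : (k : ℕ∞) + 1 < idealDepth J := by
  by_contra! hle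
  obtain ⟨xs, hlen, hxsJ, hreg, hmax⟩ :=
    exists_maximal_weaklyRegular_of_idealDepth_le (c := k + 1) (by exact_mod_cast hle)
  obtain ⟨P, hP, hJP, s, hs⟩ := exists_prime_of_maximal_weaklyRegular hreg hmax
  have hnoeth : IsNoetherianRing (Localization.AtPrime P) :=
    IsLocalization.isNoetherianRing P.primeCompl _ inferInstance
  refine hJ P hJP ?_
  by_cases hPM : P ∈ associatedPrimes A M
  · obtain ⟨ys, hylen, hys, hyreg, hymax⟩ :=
      exists_maximal_weaklyRegular_of_idealDepth_le (hdepth P hPM)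
    obtain ⟨Q, hQ, hQle, s', hs'⟩ := exists_prime_of_maximal_weaklyRegular hyreg hymax
    refine projDimLE_mono (projDimLE_length_of_socle hys hyreg (s := s') ?_ ?_ _ (hn P))
      (by omega)
    · intro h
      exact hQ.ne_top ((Ideal.eq_top_iff_one Q).mpr ((hs' 1).mpr (by rwa [one_mul])))
    · exact fun y hy ↦ (hs' y).mp (hQle hy)
  · let φ := algebraMap A (Localization.AtPrime P)
    have hofList : Ideal.ofList (xs.map φ) = (Ideal.ofList xs).map φ := (Ideal.map_ofList _ _).symm
    refine projDimLE_of_socle_of_notMem_associatedPrimes (xs := xs.map φ) (s := φ s)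
      (fun y hy ↦ ?_) (hreg.of_isLocalization _ P.primeCompl) ?_ (fun y hy ↦ ?_)
      (by simpa using hlen) (fun h ↦ hPM ?_) (hn P)
    · obtain ⟨x, hx, rfl⟩ := List.mem_map.mp hy
      exact (IsLocalization.AtPrime.to_map_mem_maximal_iff _ P x).mpr (hJP (hxsJ x hx))
    · rw [hofList, IsLocalization.algebraMap_mem_map_algebraMap_iff P.primeCompl]
      rintro ⟨m, hm, hms⟩
      exact hm ((hs m).mpr hms)
    · obtain ⟨⟨a, t⟩, hat⟩ := IsLocalization.surj P.primeCompl y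
      have ha : a ∈ P := by
        rw [← IsLocalization.AtPrime.to_map_mem_maximal_iff (Localization.AtPrime P) P, ← hat]
        exact Ideal.mul_mem_right _ _ hy
      have hmem : φ t * (y * φ s) ∈ Ideal.ofList (xs.map φ) := by
        rw [hofList, ← mul_assoc, mul_comm (φ t), hat, ← map_mul]
        exact Ideal.mem_map_of_mem φ ((hs a).mp ha)
      exact (Ideal.unit_mul_mem_iff_mem _ (IsLocalization.map_units _ t)).mp hmem
    · have :=
        Module.associatedPrimes.comap_mem_associatedPrimes_of_mem_associatedPrimes_of_isLocalizedModule_of_fg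
        P.primeCompl (LocalizedModule.mkLinearMap P.primeCompl M) _ h (IsNoetherian.noetherian _)
      rwa [← Ideal.under_def, Localization.AtPrime.under_maximalIdeal] at this

theorem depth_at_associated_primes_iff_depth_of_minors
    {N : ℕ} (I : Ideal (MvPolynomial (Fin N) ℂ)) (c : ℕ) (n : ℕ) (r : ℕ → ℕ)
    (d : ∀ k : ℕ, Matrix (Fin (r k)) (Fin (r (k + 1))) (MvPolynomial (Fin N) ℂ))
    -- `F₀ ← F₁ ← ⋯ ← Fₙ ← 0` is a free resolution of `R = A/I`:
    (ε : (Fin (r 0) → MvPolynomial (Fin N) ℂ) →ₗ[MvPolynomial (Fin N) ℂ]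
      (MvPolynomial (Fin N) ℂ ⧸ I))
    (hsur : Function.Surjective ε)
    (hker : LinearMap.ker ε = LinearMap.range (d 0).mulVecLin)
    (hlen : ∀ k, n ≤ k → d k = 0)
    (hexact : ∀ k < n, LinearMap.ker (d k).mulVecLin = LinearMap.range (d (k + 1)).mulVecLin)
    (hdepth : idealDepth I = (c : ℕ∞)) :
    (∀ (P : Ideal (MvPolynomial (Fin N) ℂ))
        (hP : IsAssociatedPrime P (MvPolynomial (Fin N) ℂ ⧸ I)),
        primeLocalDepth P hP.1 = (c : ℕ∞)) ↔
      (∀ k : ℕ, c < k + 1 → ((k : ℕ∞) + 1) < idealDepth ((d k).maxMinorsIdeal)) := by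
  let Z := (Fin (r 0) → MvPolynomial (Fin N) ℂ) ⧸ LinearMap.range (d 0).mulVecLin
  let e : Z ≃ₗ[MvPolynomial (Fin N) ℂ] (MvPolynomial (Fin N) ℂ ⧸ I) :=
    (Submodule.quotEquivOfEq _ _ hker.symm).trans (ε.quotKerEquivOfSurjective hsur)
  have hn := fun (P : Ideal (MvPolynomial (Fin N) ℂ)) (_ : P.IsPrime) ↦
    projDimLE_localizedModule_of_free_resolution hlen hexact P
  have hPD : ∀ (P : Ideal (MvPolynomial (Fin N) ℂ)) [P.IsPrime] (k : ℕ),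
      HasProjectiveDimensionLE
        (ModuleCat.of (Localization.AtPrime P) (LocalizedModule P.primeCompl Z)) k ↔
        ¬ (d k).maxMinorsIdeal ≤ P := fun P _ k ↦
    (projDimLE_localizedModule_iff_projective hlen hexact P k).trans
      (projective_localizedModule_coker_iff P (d k))
  constructor
  · intro h k hk
    refine lt_idealDepth_of_idealDepth_maximalIdeal_le (M := Z) hn
      (fun P _ hle hp ↦ (hPD P k).mp hp hle) (fun P hP hass ↦ ?_) hk
    exact (h P ((LinearEquiv.AssociatedPrimes.eq e).le hass)).le
  · intro h P hP
    have := hP.1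
    refine le_antisymm ?_ ?_
    · exact idealDepth_maximalIdeal_le_of_projDimLE_iff (M := Z)
        ((LinearEquiv.AssociatedPrimes.eq e).ge hP) (hn P hP.1) (hPD P) h
    · have hIP : I ≤ P :=
        (Submodule.annihilator_top.trans Ideal.annihilator_quotient).ge.trans hP.annihilator_le
      rw [← hdepth]
      exact sSup_le_sSup fun _ ⟨l, hl, hreg⟩ ↦ ⟨l, hl, hreg.localization hIP⟩
end
end

section
/- The action of the general linear group GL_6(ℂ) on the third exterior power ⋀³ℂ⁶ (induced by the standard action on ℂ⁶) has exactly 5 orbits; representatives are 0, e_1∧e_2∧e_3, e_1∧e_2∧e_3 + e_1∧e_4∧e_5, e_1∧e_2∧e_3 + e_1∧e_4∧e_5 + e_2∧e_4∧e_6, and e_1∧e_2∧e_3 + e_4∧e_5∧e_6. -/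
noncomputable section

open ExteriorAlgebra

/-- The standard basis vectors of `ℂ⁶`. -/
def stdBasis6 (i : Fin 6) : Fin 6 → ℂ := Pi.single i 1

/-- The wedge `e_a ∧ e_b ∧ e_c` as an element of the exterior algebra of `ℂ⁶`
(it lies in the third exterior power `⋀[ℂ]^3 ℂ⁶`). -/
def wedge3 (a b c : Fin 6) : ExteriorAlgebra ℂ (Fin 6 → ℂ) :=
  ExteriorAlgebra.ιMulti ℂ 3 ![stdBasis6 a, stdBasis6 b, stdBasis6 c]

/-- The representatives of the five `GL₆(ℂ)`-orbits on `⋀³ℂ⁶`. -/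
def orbitRep : Fin 5 → ExteriorAlgebra ℂ (Fin 6 → ℂ) :=
  ![0,
    wedge3 0 1 2,
    wedge3 0 1 2 + wedge3 0 3 4,
    wedge3 0 1 2 + wedge3 0 3 4 + wedge3 1 3 5,
    wedge3 0 1 2 + wedge3 3 4 5]

open Module

/-- Trilinear forms on a complex vector space. -/
abbrev TrilinForm (X : Type*) [AddCommGroup X] [Module ℂ X] :=
  X →ₗ[ℂ] X →ₗ[ℂ] X →ₗ[ℂ] ℂ

namespace TrilinForm

variable {X : Type*} [AddCommGroup X] [Module ℂ X] {F : TrilinForm X}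

/-- A trilinear form is alternating. -/
structure IsAlt (F : TrilinForm X) : Prop where
  left : ∀ x z, F x x z = 0
  right : ∀ x z, F x z z = 0

namespace IsAlt

lemma swap₁₂ (hF : IsAlt F) (x y z : X) : F y x z = -F x y z := by
  have h := hF.left (x + y) z
  simp only [map_add, LinearMap.add_apply, hF.left] at h
  linear_combination h

lemma swap₂₃ (hF : IsAlt F) (x y z : X) : F x z y = -F x y z := by
  have h := hF.right x (y + z)
  simp only [map_add, LinearMap.add_apply, hF.right] at h
  linear_combination h

lemma outer (hF : IsAlt F) (x z : X) : F x z x = 0 := by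
  rw [hF.swap₂₃, hF.left, neg_zero]

lemma swap (hF : IsAlt F) (x y : X) :
    (∀ z, F y x z = -F x y z) ∧ ∀ z, F z y x = -F z x y :=
  ⟨hF.swap₁₂ x y, fun z => hF.swap₂₃ z x y⟩

/-- Rewriting rules that sort the arguments of `F` among six given vectors. -/
lemma sort (hF : IsAlt F) (e f a b c d : X) :
    (((∀ z, F f e z = -F e f z) ∧ ∀ z, F z f e = -F z e f) ∧
      ((∀ z, F a e z = -F e a z) ∧ ∀ z, F z a e = -F z e a) ∧
      ((∀ z, F b e z = -F e b z) ∧ ∀ z, F z b e = -F z e b) ∧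
      ((∀ z, F c e z = -F e c z) ∧ ∀ z, F z c e = -F z e c) ∧
      ((∀ z, F d e z = -F e d z) ∧ ∀ z, F z d e = -F z e d)) ∧
    (((∀ z, F a f z = -F f a z) ∧ ∀ z, F z a f = -F z f a) ∧
      ((∀ z, F b f z = -F f b z) ∧ ∀ z, F z b f = -F z f b) ∧
      ((∀ z, F c f z = -F f c z) ∧ ∀ z, F z c f = -F z f c) ∧
      ((∀ z, F d f z = -F f d z) ∧ ∀ z, F z d f = -F z f d)) ∧
    (((∀ z, F b a z = -F a b z) ∧ ∀ z, F z b a = -F z a b) ∧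
      ((∀ z, F c a z = -F a c z) ∧ ∀ z, F z c a = -F z a c) ∧
      ((∀ z, F d a z = -F a d z) ∧ ∀ z, F z d a = -F z a d)) ∧
    (((∀ z, F c b z = -F b c z) ∧ ∀ z, F z c b = -F z b c) ∧
      ((∀ z, F d b z = -F b d z) ∧ ∀ z, F z d b = -F z b d)) ∧
    ((∀ z, F d c z = -F c d z) ∧ ∀ z, F z d c = -F z c d) := by
  refine ⟨⟨?_, ?_, ?_, ?_, ?_⟩, ⟨?_, ?_, ?_, ?_⟩, ⟨?_, ?_, ?_⟩, ⟨?_, ?_⟩, ?_⟩ <;>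
    exact hF.swap _ _

end IsAlt

/-- The `(i, j, k)` minor of three vectors of `ℂ⁶`. -/
def minor (i j k : Fin 6) (x y z : Fin 6 → ℂ) : ℂ :=
  x i * (y j * z k - y k * z j) - x j * (y i * z k - y k * z i) +
    x k * (y i * z j - y j * z i)

/-- The trilinear forms corresponding to the orbit representatives. -/
def stdForm : Fin 5 → (Fin 6 → ℂ) → (Fin 6 → ℂ) → (Fin 6 → ℂ) → ℂ :=
  ![fun _ _ _ => 0,
    fun x y z => minor 0 1 2 x y z,
    fun x y z => minor 0 1 2 x y z + minor 0 3 4 x y z,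
    fun x y z => minor 0 1 2 x y z + minor 0 3 4 x y z + minor 1 3 5 x y z,
    fun x y z => minor 0 1 2 x y z + minor 3 4 5 x y z]

/-- `F` is the `r`-th standard form in suitable coordinates. -/
def HasForm (r : Fin 5) (F : TrilinForm X) : Prop :=
  ∃ b : Basis (Fin 6) ℂ X, ∀ x y z,
    F x y z = stdForm r (b.equivFun x) (b.equivFun y) (b.equivFun z)

/-- The values of `F` on the family `x` are the coefficients of the `r`-th standard form. -/
def HasValues (r : Fin 5) (F : TrilinForm X) (x : Fin 6 → X) : Prop :=
  ∀ i j k, F (x i) (x j) (x k) =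
    stdForm r (Pi.single i 1) (Pi.single j 1) (Pi.single k 1)

lemma stdForm_swap₁₂ (r : Fin 5) (x y z : Fin 6 → ℂ) : stdForm r y x z = -stdForm r x y z := by
  fin_cases r <;> simp [stdForm, minor] <;> ring

lemma stdForm_swap₂₃ (r : Fin 5) (x y z : Fin 6 → ℂ) : stdForm r x z y = -stdForm r x y z := by
  fin_cases r <;> simp [stdForm, minor] <;> ring

lemma stdForm_left (r : Fin 5) (x z : Fin 6 → ℂ) : stdForm r x x z = 0 := by
  fin_cases r <;> simp [stdForm, minor] <;> ring

lemma stdForm_right (r : Fin 5) (x z : Fin 6 → ℂ) : stdForm r x z z = 0 := by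
  fin_cases r <;> simp [stdForm, minor] <;> ring

lemma stdForm_outer (r : Fin 5) (x z : Fin 6 → ℂ) : stdForm r x z x = 0 := by
  rw [stdForm_swap₂₃, stdForm_left, neg_zero]

lemma HasValues.of_lt (hF : IsAlt F) {r : Fin 5} {x : Fin 6 → X}
    (h : ∀ i j k, i < j → j < k → F (x i) (x j) (x k) =
      stdForm r (Pi.single i 1) (Pi.single j 1) (Pi.single k 1)) : HasValues r F x := by
  have h₁ : ∀ i j k, i < j → F (x i) (x j) (x k) =
      stdForm r (Pi.single i 1) (Pi.single j 1) (Pi.single k 1) := by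
    intro i j k hij
    rcases lt_trichotomy j k with hjk | rfl | hjk
    · exact h i j k hij hjk
    · rw [hF.right, stdForm_right]
    rcases lt_trichotomy i k with hik | rfl | hik
    · rw [hF.swap₂₃, stdForm_swap₂₃, h i k j hik hjk]
    · rw [hF.outer, stdForm_outer]
    · rw [hF.swap₂₃, stdForm_swap₂₃, hF.swap₁₂, stdForm_swap₁₂, h k i j hik hij]
  intro i j k
  rcases lt_trichotomy i j with hij | rfl | hij
  · exact h₁ i j k hij
  · rw [hF.left, stdForm_left]
  · rw [hF.swap₁₂, stdForm_swap₁₂, h₁ j i k hij]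

lemma apply_eq_sum (b : Basis (Fin 6) ℂ X) (F : TrilinForm X) (x y z : X) :
    F x y z = ∑ i, b.equivFun x i * ∑ j, b.equivFun y j * ∑ k, b.equivFun z k *
      F (b i) (b j) (b k) := by
  have key (L : X →ₗ[ℂ] ℂ) (u : X) : L u = ∑ i, b.equivFun u i * L (b i) := by
    conv_lhs => rw [← b.sum_equivFun u]
    simp only [map_sum, map_smul, smul_eq_mul]
  calc F x y z = ∑ i, b.equivFun x i * F (b i) y z := key ((F.flip y).flip z) x
    _ = _ := by
      refine Finset.sum_congr rfl fun i _ => congrArg _ ?_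
      calc F (b i) y z = ∑ j, b.equivFun y j * F (b i) (b j) z := key ((F (b i)).flip z) y
        _ = _ := Finset.sum_congr rfl fun j _ => congrArg _ (key (F (b i) (b j)) z)

lemma minor_eq_sum (a b c : Fin 6) (x y z : Fin 6 → ℂ) :
    minor a b c x y z = ∑ i, x i * ∑ j, y j * ∑ k, z k *
      minor a b c (Pi.single i 1) (Pi.single j 1) (Pi.single k 1) := by
  simp only [minor, Pi.single_apply, mul_sub, mul_add, Finset.sum_add_distrib,
    Finset.sum_sub_distrib, mul_ite, mul_one, mul_zero, Finset.sum_ite_eq, Finset.mem_univ,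
    if_true]

lemma stdForm_eq_sum (r : Fin 5) (x y z : Fin 6 → ℂ) :
    stdForm r x y z = ∑ i, x i * ∑ j, y j * ∑ k, z k *
      stdForm r (Pi.single i 1) (Pi.single j 1) (Pi.single k 1) := by
  fin_cases r <;>
    simp [stdForm, mul_add, Finset.sum_add_distrib, ← minor_eq_sum]

lemma HasValues.hasForm {r : Fin 5} {x : Fin 6 → X} (h : HasValues r F x)
    (hx : LinearIndependent ℂ x) (hX : finrank ℂ X = 6) : HasForm r F := by
  let b := basisOfLinearIndependentOfCardEqFinrank hx (by simp [hX])
  have hb : ∀ i, b i = x i := fun i => by simp [b]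
  refine ⟨b, fun u v w => ?_⟩
  rw [apply_eq_sum b, stdForm_eq_sum]
  simp only [hb, h _ _ _]

lemma HasValues.linearIndependent {r : Fin 5} {x : Fin 6 → X} (h : HasValues r F x)
    (hr : r = 3 ∨ r = 4) : LinearIndependent ℂ x := by
  rw [Fintype.linearIndependent_iff]
  intro g hg
  have key : ∀ j k, ∑ i, g i * F (x i) (x j) (x k) = 0 := by
    intro j k
    have := congrArg (fun u => F u (x j) (x k)) hg
    simpa [LinearMap.sum_apply] using this
  simp only [h _ _ _, Fin.sum_univ_six] at key
  rcases hr with rfl | rfl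
  · have h0 := key 1 2
    have h1 := key 0 2
    have h2 := key 0 1
    have h3 := key 0 4
    have h4 := key 0 3
    have h5 := key 1 3
    simp [stdForm, minor] at h0 h1 h2 h3 h4 h5
    intro i; fin_cases i <;> assumption
  · have h0 := key 1 2
    have h1 := key 0 2
    have h2 := key 0 1
    have h3 := key 4 5
    have h4 := key 3 5
    have h5 := key 3 4
    simp [stdForm, minor] at h0 h1 h2 h3 h4 h5
    intro i; fin_cases i <;> assumption

/-- In the basis `(e, f, a, b, c, d)`, the form `F` is a pencil `e* ∧ ω + f* ∧ σ` of
two-forms `ω = F e` and `σ = F f` in the variables `a, b, c, d`. -/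
structure IsPencil (F : TrilinForm X) (e f a b c d : X) : Prop where
  efa : F e f a = 0
  efb : F e f b = 0
  efc : F e f c = 0
  efd : F e f d = 0
  abc : F a b c = 0
  abd : F a b d = 0
  acd : F a c d = 0
  bcd : F b c d = 0

/-- The Pfaffian of the Gram matrix of the two-form `F e` on four vectors. -/
def pf (F : TrilinForm X) (e a b c d : X) : ℂ :=
  F e a b * F e c d - F e a c * F e b d + F e a d * F e b c

lemma hasForm_four_of_normalized (hF : IsAlt F) (hX : finrank ℂ X = 6)
    {e f p q r s : X} (h : IsPencil F e f p q r s)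
    (hpq : F f p q = 1) (hpr : F f p r = 0) (hps : F f p s = 0) (hqr : F f q r = 0)
    (hqs : F f q s = 0) (hrs : F f r s = 0) (kpr : F e p r = 0) (kps : F e p s = 0)
    (kqr : F e q r = 0) (kqs : F e q s = 0) (krs : F e r s ≠ 0) : HasForm 4 F := by
  obtain ⟨h1, h2, h3, h4, h5, h6, h7, h8⟩ := h
  have hsort := hF.sort e f p q r s
  have hv : HasValues 4 F ![f, p, q, e - F e p q • f, (1 / F e r s) • r, s] := by
    refine .of_lt hF ?_
    simp [Fin.forall_fin_succ, stdForm, minor, hF.left, hF.right, hF.outer, hsort, h1, h2, h3,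
      h4, h5, h6, h7, h8, hpq, hpr, hps, hqr, hqs, hrs, kpr, kps, kqr, kqs, krs]
  exact hv.hasForm (hv.linearIndependent (.inr rfl)) hX

lemma hasForm_three_or_four_of_normalized (hF : IsAlt F) (hX : finrank ℂ X = 6)
    {e f p q r s : X} (h : IsPencil F e f p q r s) (hω : pf F e p q r s ≠ 0)
    (hpq : F f p q = 1) (hpr : F f p r = 0) (hps : F f p s = 0) (hqr : F f q r = 0)
    (hqs : F f q s = 0) (hrs : F f r s = 0) : HasForm 3 F ∨ HasForm 4 F := by
  obtain ⟨h1, h2, h3, h4, h5, h6, h7, h8⟩ := h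
  have hsort := hF.sort e f p q r s
  by_cases hw : F e r s = 0
  · left
    have hΔ : F e p r * F e q s - F e p s * F e q r ≠ 0 := by
      intro h0
      apply hω
      rw [pf, hw]
      linear_combination -h0
    set Δ := F e p r * F e q s - F e p s * F e q r with hΔd
    have hv : HasValues 3 F ![e - F e p q • f, p, (F e q s / Δ) • r - (F e q r / Δ) • s, q,
        (F e p r / Δ) • s - (F e p s / Δ) • r, f] := by
      refine .of_lt hF ?_
      simp [Fin.forall_fin_succ, stdForm, minor, hF.left, hF.right, hF.outer, hsort, h1, h2, h3,
        h4, h5, h6, h7, h8, hpq, hpr, hps, hqr, hqs, hrs, hw]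
      refine ⟨⟨?_, ?_⟩, ?_, ?_⟩ <;> field_simp <;> ring
    exact hv.hasForm (hv.linearIndependent (.inl rfl)) hX
  · right
    refine hasForm_four_of_normalized hF hX (e := e) (f := f)
      (p := p + (F e p r / F e r s) • s - (F e p s / F e r s) • r)
      (q := q + (F e q r / F e r s) • s - (F e q s / F e r s) • r) (r := r) (s := s)
      ?_ ?_ ?_ ?_ ?_ ?_ ?_ ?_ ?_ ?_ ?_ hw
    · constructor <;>
        simp [hF.left, hF.right, hF.outer, hsort, h1, h2, h3, h4, h5, h6, h7, h8]
    all_goals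
      simp [hF.right, hsort, hpq, hpr, hps, hqr, hqs, hrs, hw]

lemma hasForm_three_or_four (hF : IsAlt F) (hX : finrank ℂ X = 6)
    {e f p q r s : X} (h : IsPencil F e f p q r s) (hω : pf F e p q r s ≠ 0)
    (hσ : pf F f p q r s = 0) (hpq : F f p q ≠ 0) : HasForm 3 F ∨ HasForm 4 F := by
  obtain ⟨h1, h2, h3, h4, h5, h6, h7, h8⟩ := h
  have hsort := hF.sort e f p q r s
  set m := F f p q with hm
  have hs : F f r s = (F f p r * F f q s - F f p s * F f q r) / m := by
    rw [eq_div_iff hpq]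
    rw [pf] at hσ
    linear_combination hσ
  refine hasForm_three_or_four_of_normalized hF hX (e := e) (f := f) (p := (1 / m) • p) (q := q)
    (r := r + (F f q r / m) • p - (F f p r / m) • q)
    (s := s + (F f q s / m) • p - (F f p s / m) • q) ?_ ?_ ?_ ?_ ?_ ?_ ?_ ?_
  · constructor <;>
      simp [hF.left, hF.right, hF.outer, hsort, h1, h2, h3, h4, h5, h6, h7, h8]
  · suffices h : pf F e ((1 / m) • p) q (r + (F f q r / m) • p - (F f p r / m) • q)
        (s + (F f q s / m) • p - (F f p s / m) • q) = pf F e p q r s / m by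
      rw [h]
      exact div_ne_zero hω hpq
    simp only [pf, map_add, map_sub, map_smul, LinearMap.add_apply, LinearMap.sub_apply,
      LinearMap.smul_apply, smul_eq_mul, hF.right, hsort]
    ring
  all_goals
    simp only [map_add, map_sub, map_smul, LinearMap.add_apply, LinearMap.sub_apply,
      LinearMap.smul_apply, smul_eq_mul, hF.right, hsort, ← hm, hs]
    field_simp
    try ring

lemma IsPencil.exists_hasForm (hF : IsAlt F) (hX : finrank ℂ X = 6) {e f a b c d : X}
    (h : IsPencil F e f a b c d) (hli : LinearIndependent ℂ ![e, a, b, c, d, f])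
    (hab : F e a b = 1) (hac : F e a c = 0) (had : F e a d = 0) (hbc : F e b c = 0)
    (hbd : F e b d = 0) (hcd : F e c d = 1) (hσ : pf F f a b c d = 0) :
    ∃ r, HasForm r F := by
  have hsort := hF.sort e f a b c d
  have hp := h
  obtain ⟨h1, h2, h3, h4, h5, h6, h7, h8⟩ := h
  have main : ∀ p q r s, IsPencil F e f p q r s → pf F e p q r s ≠ 0 → pf F f p q r s = 0 →
      F f p q ≠ 0 → ∃ r, HasForm r F := by
    intro p q r s k1 k2 k3 k4
    exact (hasForm_three_or_four hF hX k1 k2 k3 k4).elim (⟨3, ·⟩) (⟨4, ·⟩)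
  by_cases sab : F f a b = 0
  swap
  · exact main a b c d hp (by simp [pf, *]) hσ sab
  by_cases sac : F f a c = 0
  swap
  · refine main a c b d ?_ (by simp [pf, *]) ?_ sac
    · constructor <;> simp [*]
    · rw [pf] at hσ ⊢; simp only [hsort]; linear_combination -hσ
  by_cases sad : F f a d = 0
  swap
  · refine main a d b c ?_ (by simp [pf, *]) ?_ sad
    · constructor <;> simp [*]
    · rw [pf] at hσ ⊢; simp only [hsort]; linear_combination hσ
  by_cases sbc : F f b c = 0
  swap
  · refine main b c a d ?_ (by simp [pf, *]) ?_ sbc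
    · constructor <;> simp [*]
    · rw [pf] at hσ ⊢; simp only [hsort]; linear_combination hσ
  by_cases sbd : F f b d = 0
  swap
  · refine main b d a c ?_ (by simp [pf, *]) ?_ sbd
    · constructor <;> simp [*]
    · rw [pf] at hσ ⊢; simp only [hsort]; linear_combination -hσ
  by_cases scd : F f c d = 0
  swap
  · refine main c d a b ?_ (by simp [pf, *]) ?_ scd
    · constructor <;> simp [*]
    · rw [pf] at hσ ⊢; simp only [hsort]; linear_combination hσ
  have hv : HasValues 2 F ![e, a, b, c, d, f] := by
    refine .of_lt hF ?_
    simp [Fin.forall_fin_succ, stdForm, minor, *]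
  exact ⟨2, hv.hasForm hli hX⟩

lemma linearIndependent_of_symplectic (hF : IsAlt F) {e f a b c d : X}
    (hf : f ∉ Submodule.span ℂ {e})
    (hfa : F e f a = 0) (hfb : F e f b = 0) (hfc : F e f c = 0) (hfd : F e f d = 0)
    (hab : F e a b = 1) (hac : F e a c = 0) (had : F e a d = 0) (hbc : F e b c = 0)
    (hbd : F e b d = 0) (hcd : F e c d = 1) : LinearIndependent ℂ ![e, a, b, c, d, f] := by
  have hsort := hF.sort e f a b c d
  rw [Fintype.linearIndependent_iff]
  intro g hg
  simp only [Fin.sum_univ_six] at hg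
  have key : ∀ u, F e (g 0 • e + g 1 • a + g 2 • b + g 3 • c + g 4 • d + g 5 • f) u = 0 := by
    intro u
    have := congrArg (fun x => F e x u) hg
    simpa using this
  have ha := key b
  have hb := key a
  have hc := key d
  have hd := key c
  simp [hF.left, hF.right, *] at ha hb hc hd
  have hfe : g 0 • e + g 5 • f = 0 := by simpa [ha, hb, hc, hd] using hg
  have h5 : g 5 = 0 := by
    by_contra h5
    refine hf (Submodule.mem_span_singleton.2 ⟨-(g 0 / g 5), ?_⟩)
    have : f = (1 / g 5) • (g 5 • f) := by simp [smul_smul, h5]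
    rw [this, eq_neg_of_add_eq_zero_right hfe]
    module
  have he : e ≠ 0 := by
    rintro rfl
    simp at hab
  have h0 : g 0 = 0 := by simpa [h5, he] using hfe
  intro i
  fin_cases i <;> assumption

lemma exists_root_pf (s t p : ℂ) : ∃ x : ℂ, (s + x) * (t + x) + p = 0 := by
  obtain ⟨z, hz⟩ := IsAlgClosed.exists_pow_nat_eq ((s - t) ^ 2 - 4 * p) (n := 2) (by norm_num)
  refine ⟨(z - s - t) / 2, ?_⟩
  linear_combination hz / 4

lemma exists_hasForm_of_symplectic (hF : IsAlt F) (hX : finrank ℂ X = 6) {e a b c d : X}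
    (hab : F e a b = 1) (hac : F e a c = 0) (had : F e a d = 0) (hbc : F e b c = 0)
    (hbd : F e b d = 0) (hcd : F e c d = 1) : ∃ r, HasForm r F := by
  wlog h : F a b c = 0 ∧ F a b d = 0 ∧ F a c d = 0 ∧ F b c d = 0 generalizing a b c d
  · refine this (a := a - F a c d • e) (b := b - F b c d • e) (c := c - F a b c • e)
      (d := d - F a b d • e) ?_ ?_ ?_ ?_ ?_ ?_ ⟨?_, ?_, ?_, ?_⟩
    all_goals
      simp [hF.left, hF.outer, (hF.swap e _).1, (hF.swap e _).2, *]
  obtain ⟨h5, h6, h7, h8⟩ := h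
  obtain ⟨f, hfe, hfa, hfb, hfc, hfd⟩ : ∃ f, f ∉ Submodule.span ℂ {e} ∧
      F e f a = 0 ∧ F e f b = 0 ∧ F e f c = 0 ∧ F e f d = 0 := by
    let L : X →ₗ[ℂ] Fin 4 → ℂ := LinearMap.pi fun i => (F e).flip (![a, b, c, d] i)
    have : FiniteDimensional ℂ X := .of_finrank_pos (by omega)
    have he : e ≠ 0 := by
      rintro rfl
      simp at hab
    have hL := L.finrank_range_add_finrank_ker
    have hr := (LinearMap.range L).finrank_le
    rw [finrank_fin_fun] at hr
    by_contra! hcon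
    have hle : LinearMap.ker L ≤ Submodule.span ℂ {e} := by
      intro f hf
      by_contra hfe
      have hf' : ∀ i, F e f (![a, b, c, d] i) = 0 := fun i => congrFun (LinearMap.mem_ker.1 hf) i
      exact hcon f hfe (hf' 0) (hf' 1) (hf' 2) (hf' 3)
    have := Submodule.finrank_mono hle
    rw [finrank_span_singleton he] at this
    omega
  obtain ⟨t, ht⟩ := exists_root_pf (F f a b) (F f c d)
    (- F f a c * F f b d + F f a d * F f b c)
  have hfe' : f + t • e ∉ Submodule.span ℂ {e} := by
    rwa [Submodule.add_mem_iff_left _ (Submodule.smul_mem _ _ (Submodule.mem_span_singleton_self e))]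
  have hp : IsPencil F e (f + t • e) a b c d := by
    constructor <;> simp [hF.left, *]
  refine hp.exists_hasForm hF hX (linearIndependent_of_symplectic hF hfe' hp.efa hp.efb hp.efc
    hp.efd hab hac had hbc hbd hcd) hab hac had hbc hbd hcd ?_
  simp [pf, *]
  linear_combination ht

lemma exists_hasForm_of_forall_not_symplectic (hF : IsAlt F) (hX : finrank ℂ X = 6)
    (h : ∀ e a b c d, F e a b = 1 → F e a c = 0 → F e a d = 0 → F e b c = 0 → F e b d = 0 →
      F e c d = 0) : ∃ r, HasForm r F := by
  have : FiniteDimensional ℂ X := .of_finrank_pos (by omega)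
  by_cases h0 : ∀ x y z, F x y z = 0
  · exact ⟨0, (finBasisOfFinrankEq ℂ X hX), fun x y z => by simp [h0, stdForm]⟩
  push Not at h0
  obtain ⟨a, b, c, habc⟩ := h0
  wlog habc' : F a b c = 1 generalizing a
  · exact this ((1 / F a b c) • a) (by simp [habc]) (by simp [habc])
  clear habc
  rename' habc' => habc
  let L : X →ₗ[ℂ] Fin 3 → ℂ := LinearMap.pi ![F a b, F a c, F b c]
  have hL := L.finrank_range_add_finrank_ker
  have hr := (LinearMap.range L).finrank_le
  rw [finrank_fin_fun] at hr
  obtain ⟨x, hx⟩ := exists_linearIndependent_of_le_finrank (R := ℂ) (M := LinearMap.ker L)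
    (n := 3) (by omega)
  have hker : ∀ u : LinearMap.ker L, F a b u = 0 ∧ F a c u = 0 ∧ F b c u = 0 := fun u =>
    ⟨congrFun (LinearMap.mem_ker.1 u.2) 0, congrFun (LinearMap.mem_ker.1 u.2) 1,
      congrFun (LinearMap.mem_ker.1 u.2) 2⟩
  have ha : ∀ u v : LinearMap.ker L, F a u v = 0 := fun u v =>
    h a b c u v habc (hker u).1 (hker v).1 (hker u).2.1 (hker v).2.1
  have hb : ∀ u v : LinearMap.ker L, F b u v = 0 := fun u v =>
    h b c a u v (by simpa [(hF.swap a _).1, (hF.swap a _).2] using habc) (hker u).2.2 (hker v).2.2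
      (by simp [hF.swap₁₂ a b, hker]) (by simp [hF.swap₁₂ a b, hker])
  have hc : ∀ u v : LinearMap.ker L, F c u v = 0 := fun u v =>
    h c a b u v (by rw [hF.swap₁₂ a c, hF.swap₂₃ a b c, habc, neg_neg])
      (by simp [hF.swap₁₂ a c, hker]) (by simp [hF.swap₁₂ a c, hker])
      (by simp [hF.swap₁₂ b c, hker]) (by simp [hF.swap₁₂ b c, hker])
  have hu : ∀ u v w : LinearMap.ker L, F u v w = 0 := fun u v w => by
    have hbu : ∀ z, F u b z = - F b u z := fun z => hF.swap₁₂ b u z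
    have hcu : ∀ z, F u c z = - F c u z := fun z => hF.swap₁₂ c u z
    have hbc : F b u c = 0 := by rw [hF.swap₂₃ b c u, (hker u).2.2, neg_zero]
    have := h (a + u) b c v w (by simp [habc, hbu, hbc]) (by simp [hker, hbu, hb])
      (by simp [hker, hbu, hb]) (by simp [hker, hcu, hc]) (by simp [hker, hcu, hc])
    simpa [ha] using this
  have hv : HasValues 1 F ![a, b, c, x 0, x 1, x 2] := by
    refine .of_lt hF ?_
    simp [Fin.forall_fin_succ, stdForm, minor, habc, ha, hb, hc, hu, hker]
  refine ⟨1, hv.hasForm ?_ hX⟩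
  rw [Fintype.linearIndependent_iff] at hx ⊢
  intro g hg
  simp only [Fin.sum_univ_six] at hg
  have key : ∀ u v, F u v (g 0 • a + g 1 • b + g 2 • c + g 3 • (x 0 : X) + g 4 • (x 1 : X) +
      g 5 • (x 2 : X)) = 0 := by
    intro u v
    have := congrArg (F u v) hg
    simpa using this
  have g0 := key b c
  have g1 := key a c
  have g2 := key a b
  simp [hker, hF.right, hF.outer, habc, hF.swap₂₃ a b c] at g1 g2
  simp [hker, hF.right, hF.outer, habc, hF.swap₂₃ b a c, hF.swap₁₂ a b c] at g0
  have hx' := hx ![g 3, g 4, g 5] (by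
    ext
    simpa [Fin.sum_univ_three, g0, g1, g2, add_assoc] using hg)
  have g3 := hx' 0
  have g4 := hx' 1
  have g5 := hx' 2
  intro i
  fin_cases i <;> assumption

theorem exists_hasForm (hF : IsAlt F) (hX : finrank ℂ X = 6) : ∃ r, HasForm r F := by
  by_cases h : ∃ e a b c d, F e a b = 1 ∧ F e a c = 0 ∧ F e a d = 0 ∧ F e b c = 0 ∧
      F e b d = 0 ∧ F e c d = 1
  · obtain ⟨e, a, b, c, d, h1, h2, h3, h4, h5, h6⟩ := h
    exact exists_hasForm_of_symplectic hF hX h1 h2 h3 h4 h5 h6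
  · refine exists_hasForm_of_forall_not_symplectic hF hX fun e a b c d h1 h2 h3 h4 h5 => ?_
    by_contra h6
    exact h ⟨e, a, b, c, (1 / F e c d) • d, h1, h2, by simp [h3], h4, by simp [h5], by simp [h6]⟩

/-- Two vectors that are proportional on both of two complementary sets of coordinates, pairwise
among three vectors, force a linear dependence of the three vectors. -/
lemma not_linearIndependent_of_minors (p : Fin 6 → Prop) {x y z : Fin 6 → ℂ}
    (hxy : ∀ i j, (p i ↔ p j) → x i * y j = x j * y i)
    (hxz : ∀ i j, (p i ↔ p j) → x i * z j = x j * z i)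
    (hyz : ∀ i j, (p i ↔ p j) → y i * z j = y j * z i) : ¬ LinearIndependent ℂ ![x, y, z] := by
  intro hli
  rw [Fintype.linearIndependent_iff] at hli
  have h1 : ∀ α β γ : ℂ, (∀ j, α * x j + β * y j + γ * z j = 0) → α = 0 ∧ β = 0 ∧ γ = 0 := by
    intro α β γ h
    have := hli ![α, β, γ] (by ext j; simpa [Fin.sum_univ_three] using h j)
    exact ⟨this 0, this 1, this 2⟩
  have hx : ∃ i, x i ≠ 0 := by
    by_contra! hx
    exact one_ne_zero (h1 1 0 0 (by simp [hx])).1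
  obtain ⟨i, hi⟩ := hx
  have hy : ∀ a, x i * y a - y i * x a = 0 := by
    intro a
    by_cases ha : p i ↔ p a
    · linear_combination hxy i a ha
    have := (h1 ((x i * z a - z i * x a) * y i - (x i * y a - y i * x a) * z i)
      (-(x i * z a - z i * x a) * x i) ((x i * y a - y i * x a) * x i) ?_).2.2
    · exact (mul_eq_zero.1 this).resolve_right hi
    intro j
    by_cases hj : p i ↔ p j
    · linear_combination (x i * y a - y i * x a) * hxz i j hj -
        (x i * z a - z i * x a) * hxy i j hj
    · have haj : p a ↔ p j := by tauto
      linear_combination x i ^ 2 * hyz a j haj + x i * z i * hxy a j haj -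
        x i * y i * hxz a j haj
  exact hi (h1 (-y i) (x i) 0 fun j => by linear_combination hy j).2.1

lemma HasForm.eq_zero_iff {r : Fin 5} (h : HasForm r F) :
    (∀ x y z, F x y z = 0) ↔ r = 0 := by
  obtain ⟨b, hb⟩ := h
  constructor
  · intro h
    have := h (b 0) (b 1) (b 2)
    simp only [hb] at this
    fin_cases r <;> simp [stdForm, minor] at this ⊢
  · rintro rfl
    simp [hb, stdForm]

/-- The radical of `F` contains two independent vectors iff `F` has form `0` or `1`. -/
lemma HasForm.exists_pair_radical_iff {r : Fin 5} (h : HasForm r F) :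
    (∃ x y : X, LinearIndependent ℂ ![x, y] ∧ ∀ u v, F x u v = 0 ∧ F y u v = 0) ↔ r ≤ 1 := by
  obtain ⟨b, hb⟩ := h
  constructor
  · rintro ⟨x, y, hli, hxy⟩
    by_contra hr
    have key : ∀ z, (∀ u v, F z u v = 0) → ∀ i ≠ 5, b.equivFun z i = 0 := by
      intro z hz
      have h12 := hz (b 1) (b 2)
      have h02 := hz (b 0) (b 2)
      have h01 := hz (b 0) (b 1)
      have h04 := hz (b 0) (b 4)
      have h03 := hz (b 0) (b 3)
      have h45 := hz (b 4) (b 5)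
      have h35 := hz (b 3) (b 5)
      have h34 := hz (b 3) (b 4)
      simp only [hb] at *
      fin_cases r <;> simp [stdForm, minor, Fin.forall_fin_succ] at * <;> simp [*]
    have hx := key x fun u v => (hxy u v).1
    have hy := key y fun u v => (hxy u v).2
    rw [LinearIndependent.pair_iff] at hli
    have h1 := hli (b.equivFun y 5) (-b.equivFun x 5) (by
      apply b.equivFun.injective
      ext i
      by_cases hi : i = 5
      · subst hi
        simp only [map_add, map_smul, Pi.add_apply, Pi.smul_apply, smul_eq_mul, map_zero,
          Pi.zero_apply]
        ring
      · simp [map_add, map_smul, hx i hi, hy i hi, -Basis.equivFun_apply])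
    have h2 := hli 1 0 (by
      apply b.equivFun.injective
      ext i
      by_cases hi : i = 5
      · subst hi
        simpa using h1.2
      · simpa using hx i hi)
    exact one_ne_zero h2.1
  · intro hr
    refine ⟨b 3, b 4, ?_, fun u v => ?_⟩
    · have := b.linearIndependent.comp ![3, 4] (by decide)
      convert this using 1
      ext i; fin_cases i <;> rfl
    · simp only [hb]
      fin_cases r <;> simp [stdForm, minor] at hr ⊢

/-- The radical of `F` is nonzero iff `F` has form `0`, `1` or `2`. -/
lemma HasForm.exists_radical_iff {r : Fin 5} (h : HasForm r F) :
    (∃ x : X, x ≠ 0 ∧ ∀ u v, F x u v = 0) ↔ r ≤ 2 := by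
  obtain ⟨b, hb⟩ := h
  constructor
  · rintro ⟨x, hx, hxF⟩
    by_contra hr
    refine hx (b.equivFun.injective (funext ?_))
    have h12 := hxF (b 1) (b 2)
    have h02 := hxF (b 0) (b 2)
    have h01 := hxF (b 0) (b 1)
    have h04 := hxF (b 0) (b 4)
    have h03 := hxF (b 0) (b 3)
    have h13 := hxF (b 1) (b 3)
    have h45 := hxF (b 4) (b 5)
    have h35 := hxF (b 3) (b 5)
    have h34 := hxF (b 3) (b 4)
    simp only [hb] at *
    fin_cases r <;> simp [stdForm, minor, Fin.forall_fin_succ] at * <;> simp [*]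
  · intro hr
    refine ⟨b 5, b.ne_zero 5, fun u v => ?_⟩
    simp only [hb]
    fin_cases r <;> simp [stdForm, minor] at hr ⊢

/-- Among the forms `3` and `4`, only the former has three independent vectors that pairwise
annihilate `F`. -/
lemma not_hasForm_four_of_hasForm_three (h : HasForm 3 F) : ¬ HasForm 4 F := by
  rintro ⟨c, hc⟩
  obtain ⟨b, hb⟩ := h
  have hli : LinearIndependent ℂ ![b 2, b 4, b 5] := by
    have := b.linearIndependent.comp ![2, 4, 5] (by decide)
    convert this using 1
    ext i; fin_cases i <;> rfl
  have key : ∀ x y, (∀ z, F x y z = 0) → ∀ i j : Fin 6, (i < 3 ↔ j < 3) →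
      c.equivFun x i * c.equivFun y j = c.equivFun x j * c.equivFun y i := by
    intro x y hxy
    have h0 := hxy (c 0)
    have h1 := hxy (c 1)
    have h2 := hxy (c 2)
    have h3 := hxy (c 3)
    have h4 := hxy (c 4)
    have h5 := hxy (c 5)
    simp only [hc] at h0 h1 h2 h3 h4 h5
    generalize c.equivFun x = x at *
    generalize c.equivFun y = y at *
    simp [stdForm, minor] at h0 h1 h2 h3 h4 h5
    intro i j hij
    fin_cases i <;> fin_cases j <;> first | simp at hij; done | grind
  refine not_linearIndependent_of_minors (fun i => i < 3) (key (b 2) (b 4) ?_) (key (b 2) (b 5) ?_)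
    (key (b 4) (b 5) ?_) (x := c.equivFun (b 2)) (y := c.equivFun (b 4))
      (z := c.equivFun (b 5)) ?_
  · intro z; simp [hb, stdForm, minor]
  · intro z; simp [hb, stdForm, minor]
  · intro z; simp [hb, stdForm, minor]
  · have hcomp : c.equivFun.toLinearMap ∘ ![b 2, b 4, b 5] =
        ![c.equivFun (b 2), c.equivFun (b 4), c.equivFun (b 5)] := by
      ext i; fin_cases i <;> rfl
    rw [← hcomp]
    exact hli.map' c.equivFun.toLinearMap (LinearEquiv.ker _)

theorem HasForm.unique {r s : Fin 5} (hr : HasForm r F) (hs : HasForm s F) : r = s := by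
  have h0 := hr.eq_zero_iff.symm.trans hs.eq_zero_iff
  have h1 := hr.exists_pair_radical_iff.symm.trans hs.exists_pair_radical_iff
  have h2 := hr.exists_radical_iff.symm.trans hs.exists_radical_iff
  have h3 : ¬ (r = 3 ∧ s = 4) := by
    rintro ⟨rfl, rfl⟩
    exact not_hasForm_four_of_hasForm_three hr hs
  have h4 : ¬ (r = 4 ∧ s = 3) := by
    rintro ⟨rfl, rfl⟩
    exact not_hasForm_four_of_hasForm_three hs hr
  clear hr hs
  revert r s
  decide

end TrilinForm

lemma update_vec_zero {α : Type*} (a x y z : α) : Function.update ![a, y, z] 0 x = ![x, y, z] := by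
  ext i; fin_cases i <;> rfl

lemma update_vec_one {α : Type*} (a x y z : α) : Function.update ![x, a, z] 1 y = ![x, y, z] := by
  ext i; fin_cases i <;> rfl

lemma update_vec_two {α : Type*} (a x y z : α) : Function.update ![x, y, a] 2 z = ![x, y, z] := by
  ext i; fin_cases i <;> rfl

/-- The trilinear form on the dual space attached to an element of the third exterior power. -/
def dualForm (v : ⋀[ℂ]^3 (Fin 6 → ℂ)) : TrilinForm (Dual ℂ (Fin 6 → ℂ)) :=
  let A := exteriorPower.alternatingMapToDual ℂ (Fin 6 → ℂ) 3
  LinearMap.mk₂ ℂ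
    (fun x y =>
      { toFun := fun z => A ![x, y, z] v
        map_add' := fun z z' => by
          have h := LinearMap.congr_fun (A.map_update_add ![x, y, 0] 2 z z') v
          rwa [update_vec_two, update_vec_two, update_vec_two] at h
        map_smul' := fun t z => by
          have h := LinearMap.congr_fun (A.map_update_smul ![x, y, 0] 2 t z) v
          rwa [update_vec_two, update_vec_two] at h })
    (fun x x' y => by
      ext z
      have h := LinearMap.congr_fun (A.map_update_add ![0, y, z] 0 x x') v
      rwa [update_vec_zero, update_vec_zero, update_vec_zero] at h)
    (fun t x y => by
      ext z
      have h := LinearMap.congr_fun (A.map_update_smul ![0, y, z] 0 t x) v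
      rwa [update_vec_zero, update_vec_zero] at h)
    (fun x y y' => by
      ext z
      have h := LinearMap.congr_fun (A.map_update_add ![x, 0, z] 1 y y') v
      rwa [update_vec_one, update_vec_one, update_vec_one] at h)
    (fun t x y => by
      ext z
      have h := LinearMap.congr_fun (A.map_update_smul ![x, 0, z] 1 t y) v
      rwa [update_vec_one, update_vec_one] at h)

lemma dualForm_apply (v : ⋀[ℂ]^3 (Fin 6 → ℂ)) (x y z : Dual ℂ (Fin 6 → ℂ)) :
    dualForm v x y z = exteriorPower.alternatingMapToDual ℂ (Fin 6 → ℂ) 3 ![x, y, z] v := rfl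

lemma isAlt_dualForm (v : ⋀[ℂ]^3 (Fin 6 → ℂ)) : (dualForm v).IsAlt where
  left x z := by
    rw [dualForm_apply, AlternatingMap.map_eq_zero_of_eq _ _ (i := 0) (j := 1) (by simp) (by simp)]
    rfl
  right x z := by
    rw [dualForm_apply, AlternatingMap.map_eq_zero_of_eq _ _ (i := 1) (j := 2) (by simp) (by simp)]
    rfl

lemma dualForm_injective {v w : ⋀[ℂ]^3 (Fin 6 → ℂ)}
    (h : ∀ x y z, dualForm v x y z = dualForm w x y z) : v = w := by
  apply ((Pi.basisFun ℂ (Fin 6)).exteriorPower 3).ext_elem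
  intro s
  rw [exteriorPower.basis_repr_apply, exteriorPower.basis_repr_apply, exteriorPower.ιMultiDual,
    exteriorPower.pairingDual, exteriorPower.ιMulti_family,
    exteriorPower.alternatingMapLinearEquiv_apply_ιMulti]
  generalize (Pi.basisFun ℂ (Fin 6)).coord ∘ (Set.powersetCard.ofFinEmbEquiv.symm s) = u
  have := h (u 0) (u 1) (u 2)
  rw [dualForm_apply, dualForm_apply] at this
  convert this using 3 <;> ext i <;> fin_cases i <;> rfl

/-- The wedge of three vectors as an element of the third exterior power. -/
def wedge (a b c : Fin 6 → ℂ) : ⋀[ℂ]^3 (Fin 6 → ℂ) := exteriorPower.ιMulti ℂ 3 ![a, b, c]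

lemma dualForm_wedge (g : (Fin 6 → ℂ) →ₗ[ℂ] Fin 6 → ℂ) (i j k : Fin 6)
    (x y z : Dual ℂ (Fin 6 → ℂ)) :
    dualForm (wedge (g (stdBasis6 i)) (g (stdBasis6 j)) (g (stdBasis6 k))) x y z =
      TrilinForm.minor i j k (fun a => x (g (stdBasis6 a))) (fun a => y (g (stdBasis6 a)))
        (fun a => z (g (stdBasis6 a))) := by
  rw [dualForm_apply, wedge, exteriorPower.alternatingMapToDual_apply_ιMulti, Matrix.det_fin_three]
  simp [TrilinForm.minor]
  ring

/-- The image of an orbit representative under a linear map, in the third exterior power. -/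
def mapOrbitRep (g : (Fin 6 → ℂ) →ₗ[ℂ] Fin 6 → ℂ) : Fin 5 → ⋀[ℂ]^3 (Fin 6 → ℂ) :=
  let w i j k := wedge (g (stdBasis6 i)) (g (stdBasis6 j)) (g (stdBasis6 k))
  ![0, w 0 1 2, w 0 1 2 + w 0 3 4, w 0 1 2 + w 0 3 4 + w 1 3 5, w 0 1 2 + w 3 4 5]

lemma map_wedge3 (g : (Fin 6 → ℂ) →ₗ[ℂ] Fin 6 → ℂ) (i j k : Fin 6) :
    ExteriorAlgebra.map g (wedge3 i j k) =
      wedge (g (stdBasis6 i)) (g (stdBasis6 j)) (g (stdBasis6 k)) := by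
  rw [wedge3, ExteriorAlgebra.map_apply_ιMulti, wedge, exteriorPower.ιMulti_apply_coe]
  congr 1
  ext i; fin_cases i <;> rfl

lemma coe_mapOrbitRep (g : (Fin 6 → ℂ) →ₗ[ℂ] Fin 6 → ℂ) (r : Fin 5) :
    (mapOrbitRep g r : ExteriorAlgebra ℂ (Fin 6 → ℂ)) = ExteriorAlgebra.map g (orbitRep r) := by
  fin_cases r <;> simp [mapOrbitRep, orbitRep, map_wedge3]

lemma dualForm_add (v w : ⋀[ℂ]^3 (Fin 6 → ℂ)) (x y z : Dual ℂ (Fin 6 → ℂ)) :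
    dualForm (v + w) x y z = dualForm v x y z + dualForm w x y z := by
  simp [dualForm_apply]

lemma dualForm_mapOrbitRep (g : (Fin 6 → ℂ) →ₗ[ℂ] Fin 6 → ℂ) (r : Fin 5)
    (x y z : Dual ℂ (Fin 6 → ℂ)) :
    dualForm (mapOrbitRep g r) x y z =
      TrilinForm.stdForm r (fun a => x (g (stdBasis6 a))) (fun a => y (g (stdBasis6 a)))
        (fun a => z (g (stdBasis6 a))) := by
  fin_cases r <;>
    simp [mapOrbitRep, TrilinForm.stdForm, dualForm_add, dualForm_wedge]
  simp [dualForm_apply]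

lemma hasForm_dualForm_iff (v : ⋀[ℂ]^3 (Fin 6 → ℂ)) (r : Fin 5) :
    TrilinForm.HasForm r (dualForm v) ↔ ∃ g : (Fin 6 → ℂ) ≃ₗ[ℂ] (Fin 6 → ℂ),
      ExteriorAlgebra.map (g : (Fin 6 → ℂ) →ₗ[ℂ] (Fin 6 → ℂ)) (orbitRep r) = v := by
  constructor
  · rintro ⟨b, hb⟩
    let c := b.dualBasis.map (evalEquiv ℂ (Fin 6 → ℂ)).symm
    let g := (Pi.basisFun ℂ (Fin 6)).equiv c (Equiv.refl _)
    have hg : ∀ a (x : Dual ℂ (Fin 6 → ℂ)), x (g (stdBasis6 a)) = b.equivFun x a := by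
      intro a x
      have : g (stdBasis6 a) = c a := by
        have := (Pi.basisFun ℂ (Fin 6)).equiv_apply a c (Equiv.refl _)
        rwa [Pi.basisFun_apply] at this
      rw [this, Basis.map_apply, apply_evalEquiv_symm_apply, Basis.coe_dualBasis,
        Basis.coord_apply, Basis.equivFun_apply]
    refine ⟨g, ?_⟩
    rw [← coe_mapOrbitRep, SetLike.coe_eq_coe]
    refine dualForm_injective fun x y z => ?_
    rw [dualForm_mapOrbitRep, hb]
    simp only [LinearEquiv.coe_coe, hg]
  · rintro ⟨g, hg⟩
    rw [← coe_mapOrbitRep, SetLike.coe_eq_coe] at hg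
    refine ⟨((Pi.basisFun ℂ (Fin 6)).map g).dualBasis, fun x y z => ?_⟩
    rw [← hg, dualForm_mapOrbitRep]
    have (x : Dual ℂ (Fin 6 → ℂ)) : ((Pi.basisFun ℂ (Fin 6)).map g).dualBasis.equivFun x =
        fun a => x (g (stdBasis6 a)) := by
      ext a
      simp [stdBasis6]
    simp only [this, LinearEquiv.coe_coe]

/-- The action of `GL₆(ℂ)` on `⋀³ℂ⁶` has exactly 5 orbits, with representatives
`0`, `e₁∧e₂∧e₃`, `e₁∧e₂∧e₃ + e₁∧e₄∧e₅`, `e₁∧e₂∧e₃ + e₁∧e₄∧e₅ + e₂∧e₄∧e₆` and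
`e₁∧e₂∧e₃ + e₄∧e₅∧e₆`: every element of `⋀³ℂ⁶` lies in the orbit of exactly one
of the representatives. -/
theorem wedge_cube_C6_five_orbits :
    ∀ v ∈ ⋀[ℂ]^3 (Fin 6 → ℂ),
      ∃! i : Fin 5, ∃ g : (Fin 6 → ℂ) ≃ₗ[ℂ] (Fin 6 → ℂ),
        ExteriorAlgebra.map (g : (Fin 6 → ℂ) →ₗ[ℂ] (Fin 6 → ℂ)) (orbitRep i) = v := by
  intro v hv
  obtain ⟨r, hr⟩ := TrilinForm.exists_hasForm (isAlt_dualForm ⟨v, hv⟩)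
    (by rw [Subspace.dual_finrank_eq, finrank_fin_fun])
  refine ⟨r, (hasForm_dualForm_iff ⟨v, hv⟩ r).1 hr, fun s hs => ?_⟩
  exact ((hasForm_dualForm_iff ⟨v, hv⟩ s).2 hs).unique hr
end
end
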